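/- arXiv:0704.2500 — 6 statements merged into one kernel-verified Lean document; each statement's English description precedes it below -/
import Mathlib

section
/- Under the model-selection aggregation procedure described in the context, if the finite set of probe functions Ψ is (γ,p)-good with respect to G, then the selected estimator f̂ = f_î satisfies the oracle inequality E‖f̂ − f‖_p ≤ (2·max_{ψ∈Ψ*} ‖ψ‖_q + 1)·min_{i∈I_N} ‖f − f_i‖_p + 2κε·max_{ψ∈Ψ*} ‖ψ‖_2 + γ + (‖f‖_p + max_{i∈I_N} ‖f_i‖_p)·δ. -/
open MeasureTheory
open scoped ENNReal

/-- Lebesgue measure restricted to the unit cube `[0,1]^d`. -/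
noncomputable def cubeMeasure (d : ℕ) : Measure (Fin d → ℝ) :=
  volume.restrict (Set.Icc 0 1)

/-- The real-valued `L^r` norm on the unit cube. -/
noncomputable def Lnorm {d : ℕ} (r : ℝ≥0∞) (g : (Fin d → ℝ) → ℝ) : ℝ :=
  (eLpNorm g r (cubeMeasure d)).toReal

/-!
Off the event `{κ ≤ max |Z ψ| / ‖ψ‖₂}`, every noise term `ε Z ψ` is within its threshold `ε κ ‖ψ‖₂`.
Hence `M̂_{i*} ≤ ‖f - f_{i*}‖`, so `M̂_î ≤ ‖f - f_{i*}‖` by the choice of `î`, and this controls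
`∫ ψ (f - f_î)` for each probe `ψ`. Applied to the representer of `f_{i*} - f_î`, it bounds
`‖f_{i*} - f_î‖` up to `γ`, and the triangle inequality gives the deterministic part of the bound.
On the event, which has probability at most `δ`, the loss is at most `‖f‖ + max ‖f_i‖`.

Only the norm of `L^p` and the probes as functionals on it enter, so the argument takes place in a
seminormed space.
-/

section NormalizedExcess

variable {K : Type*}

/-- The selection statistic `M̂`: the largest excess of a residual `r k` over its noise threshold
`τ k`, in units of the size `c k` of the `k`-th probe. In the aggregation procedure,
`c k = ‖ψ_k‖_q` and `τ k = ε κ ‖ψ_k‖₂`. -/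
noncomputable def normalizedExcess (c τ r : K → ℝ) : ℝ :=
  ⨆ k, (|r k| - τ k) / c k

theorem normalizedExcess_le {c τ r : K → ℝ} {a : ℝ} (ha : 0 ≤ a) (hc : ∀ k, 0 < c k)
    (hr : ∀ k, |r k| ≤ a * c k + τ k) : normalizedExcess c τ r ≤ a :=
  Real.iSup_le (fun k => (div_le_iff₀ (hc k)).2 (sub_le_iff_le_add.2 (hr k))) ha

theorem abs_le_normalizedExcess_mul_add [Finite K] {c : K → ℝ} (τ r : K → ℝ) {k : K}
    (hk : 0 < c k) :
    |r k| ≤ normalizedExcess c τ r * c k + τ k :=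
  sub_le_iff_le_add.1 <| (div_le_iff₀ hk).1 <|
    Finite.le_ciSup (fun k => (|r k| - τ k) / c k) k

end NormalizedExcess

theorem abs_mul_le_of_iSup_div_lt {K : Type*} [Finite K] {Z σ : K → ℝ} {ε κ : ℝ} (hε : 0 ≤ ε)
    (hσ : ∀ k, 0 < σ k) (hZ : ⨆ k, |Z k| / σ k < κ) (k : K) : |ε * Z k| ≤ ε * κ * σ k := by
  have hZk : |Z k| ≤ κ * σ k :=
    (div_le_iff₀ (hσ k)).1 ((Finite.le_ciSup (fun k => |Z k| / σ k) k).trans hZ.le)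
  rw [abs_mul, abs_of_nonneg hε, mul_assoc]
  exact mul_le_mul_of_nonneg_left hZk hε

theorem integral_le_add_mul_measureReal {Ω : Type*} [MeasurableSpace Ω] {P : Measure Ω}
    [IsProbabilityMeasure P] {X : Ω → ℝ} {A : Set Ω} {a b : ℝ} (hX : Integrable X P)
    (hA : MeasurableSet A) (h_off : ∀ ω ∉ A, X ω ≤ a) (h_on : ∀ ω ∈ A, X ω ≤ a + b) :
    ∫ ω, X ω ∂P ≤ a + b * P.real A := by
  have hb : Integrable (A.indicator fun _ => b) P := (integrable_const b).indicator hA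
  calc ∫ ω, X ω ∂P ≤ ∫ ω, a + A.indicator (fun _ => b) ω ∂P := by
        refine integral_mono hX ((integrable_const a).add hb) fun ω => ?_
        by_cases hω : ω ∈ A
        · simpa [hω] using h_on ω hω
        · simpa [hω] using h_off ω hω
    _ = a + b * P.real A := by
        rw [integral_add (integrable_const a) hb, integral_indicator_const b hA]
        simp [mul_comm]

section SeminormedSpace

variable {E : Type*} [SeminormedAddCommGroup E] [NormedSpace ℝ E] {K : Type*}
  {φ : K → StrongDual ℝ E} {c : K → ℝ}

theorem normalizedExcess_apply_add_le_norm {τ ξ : K → ℝ} (hc : ∀ k, 0 < c k)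
    (hφ : ∀ k, ‖φ k‖ ≤ c k) (hξ : ∀ k, |ξ k| ≤ τ k) (z : E) :
    normalizedExcess c τ (fun k => φ k z + ξ k) ≤ ‖z‖ := by
  refine normalizedExcess_le (norm_nonneg z) hc fun k => (abs_add_le _ _).trans ?_
  rw [mul_comm]
  exact add_le_add ((φ k).le_of_opNorm_le (hφ k) z) (hξ k)

theorem norm_le_of_normalizedExcess_le [Finite K] {τ ξ : K → ℝ} (hc : ∀ k, 0 < c k)
    (hφ : ∀ k, ‖φ k‖ ≤ c k) (hξ : ∀ k, |ξ k| ≤ τ k) {z z₀ : E}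
    (hz : normalizedExcess c τ (fun k => φ k z + ξ k) ≤
      normalizedExcess c τ (fun k => φ k z₀ + ξ k))
    {k : K} {γ : ℝ} (hk : ‖z - z₀‖ ≤ φ k (z - z₀) + γ) :
    ‖z‖ ≤ (2 * c k + 1) * ‖z₀‖ + 2 * τ k + γ := by
  have h_residual : |φ k z + ξ k| ≤ ‖z₀‖ * c k + τ k := by
    refine (abs_le_normalizedExcess_mul_add τ (fun k => φ k z + ξ k) (hc k)).trans ?_
    gcongr
    · exact (hc k).le
    · exact hz.trans (normalizedExcess_apply_add_le_norm hc hφ hξ z₀)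
  have h_apply : φ k z ≤ ‖z₀‖ * c k + 2 * τ k := by
    linarith [(abs_le.1 h_residual).2, (abs_le.1 (hξ k)).1]
  have h_apply₀ : -(c k * ‖z₀‖) ≤ φ k z₀ := (abs_le.1 ((φ k).le_of_opNorm_le (hφ k) z₀)).1
  rw [map_sub] at hk
  linarith [norm_le_norm_sub_add z z₀]

variable {ι : Type*} [Finite ι] {f : E} {v : ι → E} {i₀ : ι} {rep : ι → K} {σ : K → ℝ}
  {γ ε κ : ℝ}

theorem norm_sub_le_of_normalizedExcess_le [Finite K] {ξ : K → ℝ} (hc : ∀ k, 0 < c k)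
    (hφ : ∀ k, ‖φ k‖ ≤ c k) (hσ : ∀ k, 0 < σ k) (hγ : 0 ≤ γ) (hε : 0 ≤ ε) (hκ : 0 ≤ κ)
    (hrep : ∀ j ≠ i₀, ‖v i₀ - v j‖ ≤ φ (rep j) (v i₀ - v j) + γ)
    (hξ : ∀ k, |ξ k| ≤ ε * κ * σ k) {i : ι}
    (hi : normalizedExcess c (fun k => ε * κ * σ k) (fun k => φ k (f - v i) + ξ k) ≤
      normalizedExcess c (fun k => ε * κ * σ k) (fun k => φ k (f - v i₀) + ξ k)) :
    ‖f - v i‖ ≤ (2 * (⨆ j : {j // j ≠ i₀}, c (rep j)) + 1) * ‖f - v i₀‖ +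
      2 * κ * ε * (⨆ j : {j // j ≠ i₀}, σ (rep j)) + γ := by
  obtain rfl | h_ne := eq_or_ne i i₀
  · have hC : 0 ≤ ⨆ j : {j // j ≠ i}, c (rep j) := Real.iSup_nonneg fun _ => (hc _).le
    have hS : 0 ≤ ⨆ j : {j // j ≠ i}, σ (rep j) := Real.iSup_nonneg fun _ => (hσ _).le
    have h_rest : 0 ≤ 2 * (⨆ j : {j // j ≠ i}, c (rep j)) * ‖f - v i‖ +
      2 * κ * ε * (⨆ j : {j // j ≠ i}, σ (rep j)) + γ := by positivity
    linarith
  · have hC := Finite.le_ciSup (fun j : {j // j ≠ i₀} => c (rep j)) ⟨i, h_ne⟩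
    have hS := Finite.le_ciSup (fun j : {j // j ≠ i₀} => σ (rep j)) ⟨i, h_ne⟩
    calc ‖f - v i‖ ≤ (2 * c (rep i) + 1) * ‖f - v i₀‖ + 2 * (ε * κ * σ (rep i)) + γ :=
          norm_le_of_normalizedExcess_le hc hφ hξ hi <| by
            simpa only [sub_sub_sub_cancel_left] using hrep i h_ne
      _ = (2 * c (rep i) + 1) * ‖f - v i₀‖ + 2 * κ * ε * σ (rep i) + γ := by ring
      _ ≤ _ := by gcongr

theorem integral_norm_sub_le_of_normalizedExcess_le [Finite K] [MeasurableSpace ι]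
    [MeasurableSingletonClass ι] {Ω : Type*} [MeasurableSpace Ω] {P : Measure Ω}
    [IsProbabilityMeasure P] {Z : K → Ω → ℝ} {ihat : Ω → ι} {δ : ℝ} (hc : ∀ k, 0 < c k)
    (hφ : ∀ k, ‖φ k‖ ≤ c k) (hσ : ∀ k, 0 < σ k) (hγ : 0 ≤ γ) (hε : 0 ≤ ε) (hκ : 0 ≤ κ)
    (hrep : ∀ j ≠ i₀, ‖v i₀ - v j‖ ≤ φ (rep j) (v i₀ - v j) + γ)
    (hZ : ∀ k, Measurable (Z k)) (hδ : P.real {ω | κ ≤ ⨆ k, |Z k ω| / σ k} ≤ δ)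
    (hihat : Measurable ihat)
    (hmin : ∀ ω,
      normalizedExcess c (fun k => ε * κ * σ k) (fun k => φ k (f - v (ihat ω)) + ε * Z k ω) ≤
        normalizedExcess c (fun k => ε * κ * σ k) (fun k => φ k (f - v i₀) + ε * Z k ω)) :
    ∫ ω, ‖v (ihat ω) - f‖ ∂P ≤
      (2 * (⨆ j : {j // j ≠ i₀}, c (rep j)) + 1) * ‖f - v i₀‖ +
        2 * κ * ε * (⨆ j : {j // j ≠ i₀}, σ (rep j)) + γ + (‖f‖ + ⨆ i, ‖v i‖) * δ := by
  have hC : 0 ≤ ⨆ j : {j // j ≠ i₀}, c (rep j) := Real.iSup_nonneg fun _ => (hc _).le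
  have hS : 0 ≤ ⨆ j : {j // j ≠ i₀}, σ (rep j) := Real.iSup_nonneg fun _ => (hσ _).le
  have hV : 0 ≤ ⨆ i, ‖v i‖ := Real.iSup_nonneg fun _ => norm_nonneg _
  have h_int : Integrable (fun ω => ‖v (ihat ω) - f‖) P :=
    (Integrable.of_finite (f := fun i => ‖v i - f‖)).comp_measurable hihat
  have h_event : MeasurableSet {ω | κ ≤ ⨆ k, |Z k ω| / σ k} := by measurability
  refine (integral_le_add_mul_measureReal (b := ‖f‖ + ⨆ i, ‖v i‖) h_int h_event
    (fun ω hω => ?_) (fun ω _ => ?_)).trans (by gcongr)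
  · have h_noise := abs_mul_le_of_iSup_div_lt hε hσ (not_le.1 hω)
    rw [norm_sub_rev]
    exact norm_sub_le_of_normalizedExcess_le hc hφ hσ hγ hε hκ hrep h_noise (hmin ω)
  · calc ‖v (ihat ω) - f‖ ≤ ‖f‖ + ‖v (ihat ω)‖ := (norm_sub_le _ _).trans_eq (add_comm _ _)
      _ ≤ ‖f‖ + ⨆ i, ‖v i‖ := by gcongr; exact Finite.le_ciSup (fun i => ‖v i‖) (ihat ω)
      _ ≤ _ := le_add_of_nonneg_left (by positivity)

end SeminormedSpace

section LpPairing

variable {α : Type*} [MeasurableSpace α] {μ : Measure α} {p q : ℝ≥0∞}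

theorem norm_lpPairing_apply_le {𝕜 E F G : Type*} [RCLike 𝕜] [NormedAddCommGroup E]
    [NormedAddCommGroup F] [NormedAddCommGroup G] [NormedSpace 𝕜 E] [NormedSpace 𝕜 F]
    [NormedSpace 𝕜 G] [NormedSpace ℝ G] [SMulCommClass ℝ 𝕜 G] [CompleteSpace G]
    [p.HolderConjugate q] [Fact (1 ≤ p)] [Fact (1 ≤ q)] (B : E →L[𝕜] F →L[𝕜] G) (u : Lp E p μ) :
    ‖B.lpPairing μ p q u‖ ≤ ‖B‖ * ‖u‖ := by
  refine ContinuousLinearMap.opNorm_le_bound _ (by positivity) fun g => ?_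
  have h_lpPairing : B.lpPairing μ p q u g = L1.integral (B.holder 1 u g) := by
    simp [ContinuousLinearMap.lpPairing, ← L1.integral_eq']
  rw [h_lpPairing]
  exact (L1.norm_integral_le (B.holder 1 u g)).trans (B.norm_holder_apply_apply_le u g)

theorem lpPairing_mul_toLp [p.HolderConjugate q] [Fact (1 ≤ p)] [Fact (1 ≤ q)] {u g : α → ℝ}
    (hu : MemLp u p μ) (hg : MemLp g q μ) :
    (ContinuousLinearMap.mul ℝ ℝ).lpPairing μ p q (hu.toLp u) (hg.toLp g) =
      ∫ t, u t * g t ∂μ := by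
  rw [ContinuousLinearMap.lpPairing_eq_integral]
  refine integral_congr_ae ?_
  filter_upwards [hu.coeFn_toLp, hg.coeFn_toLp] with t hut hgt
  rw [hut, hgt, ContinuousLinearMap.mul_apply']

theorem toReal_eLpNorm_pos_of_pos {r s : ℝ≥0∞} {u : α → ℝ} (hu : MemLp u s μ) (hs : s ≠ 0)
    (hr : 0 < (eLpNorm u r μ).toReal) : 0 < (eLpNorm u s μ).toReal := by
  refine ENNReal.toReal_pos (fun h₀ => ?_) hu.eLpNorm_ne_top
  rw [eLpNorm_eq_zero_iff hu.1 hs] at h₀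
  simp [eLpNorm_eq_zero_of_ae_zero h₀] at hr

end LpPairing

theorem stmt_0_general {α ι K Ω : Type*} [MeasurableSpace α] {μ : Measure α} {p q : ℝ≥0∞}
    [q.HolderConjugate p] [Finite ι] [MeasurableSpace ι] [MeasurableSingletonClass ι] [Finite K]
    [MeasurableSpace Ω] {P : Measure Ω} [IsProbabilityMeasure P]
    {f : α → ℝ} {F : ι → α → ℝ} {ψ : K → α → ℝ} {σ : K → ℝ} {i₀ : ι} {rep : ι → K}
    {γ ε κ δ : ℝ} {Z : K → Ω → ℝ} {ihat : Ω → ι}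
    (hf : MemLp f p μ) (hF : ∀ i, MemLp (F i) p μ) (hψ : ∀ k, MemLp (ψ k) q μ)
    (hψ_pos : ∀ k, 0 < (eLpNorm (ψ k) q μ).toReal) (hσ : ∀ k, 0 < σ k)
    (hγ : 0 ≤ γ) (hε : 0 ≤ ε) (hκ : 0 ≤ κ)
    (hrep : ∀ j ≠ i₀, (eLpNorm (fun t => F i₀ t - F j t) p μ).toReal ≤
      (∫ t, ψ (rep j) t * (F i₀ t - F j t) ∂μ) + γ)
    (hZ : ∀ k, Measurable (Z k)) (hδ : P.real {ω | κ ≤ ⨆ k, |Z k ω| / σ k} ≤ δ)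
    (hihat : Measurable ihat)
    (hmin : ∀ ω,
      normalizedExcess (fun k => (eLpNorm (ψ k) q μ).toReal) (fun k => ε * κ * σ k)
          (fun k => (∫ t, ψ k t * (f t - F (ihat ω) t) ∂μ) + ε * Z k ω) ≤
        normalizedExcess (fun k => (eLpNorm (ψ k) q μ).toReal) (fun k => ε * κ * σ k)
          (fun k => (∫ t, ψ k t * (f t - F i₀ t) ∂μ) + ε * Z k ω)) :
    ∫ ω, (eLpNorm (fun t => F (ihat ω) t - f t) p μ).toReal ∂P ≤
      (2 * (⨆ j : {j // j ≠ i₀}, (eLpNorm (ψ (rep j)) q μ).toReal) + 1) *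
          (eLpNorm (fun t => f t - F i₀ t) p μ).toReal +
        2 * κ * ε * (⨆ j : {j // j ≠ i₀}, σ (rep j)) + γ +
        ((eLpNorm f p μ).toReal + ⨆ i, (eLpNorm (F i) p μ).toReal) * δ := by
  have : Fact (1 ≤ q) := ⟨ENNReal.HolderConjugate.one_le q p⟩
  have : p.HolderConjugate q := ENNReal.HolderTriple.symm
  have : Fact (1 ≤ p) := ⟨ENNReal.HolderConjugate.one_le p q⟩
  let φ (k : K) : StrongDual ℝ (Lp ℝ p μ) :=
    (ContinuousLinearMap.mul ℝ ℝ).lpPairing μ q p ((hψ k).toLp (ψ k))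
  have hφ (k : K) : ‖φ k‖ ≤ (eLpNorm (ψ k) q μ).toReal := by
    simpa using norm_lpPairing_apply_le (q := p) (.mul ℝ ℝ) ((hψ k).toLp (ψ k))
  have norm_toLp_sub {u g : α → ℝ} (hu : MemLp u p μ) (hg : MemLp g p μ) :
      ‖hu.toLp u - hg.toLp g‖ = (eLpNorm (fun t => u t - g t) p μ).toReal := by
    rw [← MemLp.toLp_sub, Lp.norm_toLp]; rfl
  have apply_toLp_sub {u g : α → ℝ} (hu : MemLp u p μ) (hg : MemLp g p μ) (k : K) :
      φ k (hu.toLp u - hg.toLp g) = ∫ t, ψ k t * (u t - g t) ∂μ := by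
    rw [← MemLp.toLp_sub]; exact lpPairing_mul_toLp (hψ k) (hu.sub hg)
  have h_oracle := integral_norm_sub_le_of_normalizedExcess_le (φ := φ) (f := hf.toLp f)
    (v := fun i => (hF i).toLp (F i)) (i₀ := i₀) (rep := rep) (γ := γ) (ε := ε)
    (ihat := ihat) hψ_pos hφ hσ hγ hε hκ
    (by simpa only [norm_toLp_sub, apply_toLp_sub] using hrep) hZ hδ hihat
    (by simpa only [apply_toLp_sub] using hmin)
  simpa only [norm_toLp_sub, Lp.norm_toLp] using h_oracle

/-- Theorem 1 of the paper: the basic oracle inequality for the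
model-selection aggregation procedure with a `(γ,p)`-good set of probe functions. -/
theorem stmt_0
    {d N : ℕ} (hd : 1 ≤ d) (hN : 2 ≤ N)
    (p q : ℝ≥0∞) (hp : 1 ≤ p) (hpq : 1 / p + 1 / q = 1)
    (γ : ℝ) (hγ : 0 ≤ γ)
    (f : (Fin d → ℝ) → ℝ) (F : Fin N → (Fin d → ℝ) → ℝ)
    (hfm : Measurable f) (hFm : ∀ i, Measurable (F i))
    (hf : eLpNorm f p (cubeMeasure d) ≠ ⊤)
    (hF : ∀ i, eLpNorm (F i) p (cubeMeasure d) ≠ ⊤)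
    (hFdist : ∀ i j, i ≠ j → F i ≠ F j)
    -- the finite set of probe functions `Ψ`, indexed by `K`
    {K : Type} [Fintype K] [Nonempty K]
    (ψ : K → (Fin d → ℝ) → ℝ) (hψm : ∀ k, Measurable (ψ k))
    (hψq : ∀ k, eLpNorm (ψ k) q (cubeMeasure d) ≠ ⊤)
    (hψ2 : ∀ k, eLpNorm (ψ k) 2 (cubeMeasure d) ≠ ⊤)
    (hψpos : ∀ k, 0 < Lnorm q (ψ k))
    -- `Ψ` is `(γ,p)`-good w.r.t. `G`: designated representers for pairwise differences
    (rep : Fin N → Fin N → K)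
    (hgood : ∀ i j, i ≠ j →
      |(∫ t, ψ (rep i j) t * (F i t - F j t) ∂(cubeMeasure d)) -
        Lnorm p (fun t => F i t - F j t)| ≤ γ)
    -- the aggregation procedure
    {Ω : Type} [MeasurableSpace Ω] (P : Measure Ω) [IsProbabilityMeasure P]
    (ε δ : ℝ) (hε : 0 < ε) (hδ0 : 0 < δ) (hδ1 : δ < 1)
    (Z : K → Ω → ℝ) (hZm : ∀ k, Measurable (Z k))
    (κ : ℝ) (hκpos : 0 < κ)
    (hκ : (P {ω | κ ≤ ⨆ k, |Z k ω| / Lnorm 2 (ψ k)}).toReal ≤ δ)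
    (Δ : Fin N → K → Ω → ℝ)
    (hΔ : ∀ i k ω, Δ i k ω =
      (∫ t, ψ k t * (f t - F i t) ∂(cubeMeasure d)) + ε * Z k ω)
    (Mhat : Fin N → Ω → ℝ)
    (hM : ∀ i ω, Mhat i ω =
      ⨆ k, (|Δ i k ω| - ε * κ * Lnorm 2 (ψ k)) / Lnorm q (ψ k))
    (ihat : Ω → Fin N) (hihatm : Measurable ihat)
    (hmin : ∀ ω i, Mhat (ihat ω) ω ≤ Mhat i ω)
    -- the oracle index
    (istar : Fin N)
    (histar : ∀ i, Lnorm p (fun t => f t - F istar t) ≤ Lnorm p (fun t => f t - F i t)) :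
    ∫ ω, Lnorm p (fun t => F (ihat ω) t - f t) ∂P ≤
      (2 * (⨆ j : {j : Fin N // j ≠ istar}, Lnorm q (ψ (rep istar j.1))) + 1) *
          (⨅ i, Lnorm p (fun t => f t - F i t))
        + 2 * κ * ε * (⨆ j : {j : Fin N // j ≠ istar}, Lnorm 2 (ψ (rep istar j.1)))
        + γ + (Lnorm p f + ⨆ i, Lnorm p (F i)) * δ := by
  have hψ_pos_two (k : K) : 0 < Lnorm 2 (ψ k) :=
    toReal_eLpNorm_pos_of_pos ⟨(hψm k).aestronglyMeasurable, (hψ2 k).lt_top⟩ two_ne_zero (hψpos k)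
  have h_conj : q.HolderConjugate p :=
    ENNReal.holderConjugate_iff.2 (by simpa [add_comm] using hpq)
  have h_min : ⨅ i, Lnorm p (fun t => f t - F i t) = Lnorm p (fun t => f t - F istar t) :=
    le_antisymm (Finite.ciInf_le _ istar) (have : Nonempty (Fin N) := ⟨istar⟩; le_ciInf histar)
  rw [h_min]
  refine stmt_0_general ⟨hfm.aestronglyMeasurable, hf.lt_top⟩
    (fun i => ⟨(hFm i).aestronglyMeasurable, (hF i).lt_top⟩)
    (fun k => ⟨(hψm k).aestronglyMeasurable, (hψq k).lt_top⟩) hψpos hψ_pos_two hγ hε.le hκpos.le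
    (fun j hj => ?_) hZm hκ hihatm (fun ω => ?_)
  · exact sub_le_iff_le_add'.1 (abs_sub_le_iff.1 (hgood istar j hj.symm)).2
  · simp only [hM, hΔ] at hmin
    exact hmin ω istar
end

section
/- In the deterministic setting described in the context, if Ψ is (γ,p)-good with respect to G and î ∈ I_N minimizes M̂_i := max_{ψ∈Ψ} (|Δ_i(ψ)| − εκ‖ψ‖_2)/‖ψ‖_q over i ∈ I_N, then ‖f_{i*} − f_î‖_p ≤ 2·(max_{ψ∈Ψ*} ‖ψ‖_q)·‖f − f_{i*}‖_p + 2εκ·max_{ψ∈Ψ*} ‖ψ‖_2 + γ. -/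
open MeasureTheory
open scoped ENNReal

/-!
By Hölder, every residual satisfies `|Δ_i(ψ)| ≤ ‖f - f_i‖_p ‖ψ‖_q + εκ‖ψ‖₂`, so the criterion at the
oracle `i*` is at most `‖f - f_{i*}‖_p`. The criterion at the selected index `î` is then no larger,
which bounds `|Δ_î(ψ)|` by the same right-hand side for every probe `ψ`. The noise cancels in
`Δ_î(ψ) - Δ_{i*}(ψ) = ∫ ψ (f_{i*} - f_î)`, and for the representer of `f_{i*} - f_î` this integral
is `‖f_{i*} - f_î‖_p` up to `γ`.
-/

section PenalizedDiscrepancy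

variable {K E : Type*} [SeminormedAddCommGroup E] {w τ : K → ℝ} {Δ Δ₀ : K → E} {A B : ℝ}

/-- The selection criterion `M̂ = sup_k (‖Δ k‖ - τ k) / w k` of a family of residuals `Δ`, where
`τ k` is the noise level tolerated at the probe `k` and `w k` is its weight. For an unbounded family
of quotients the real supremum takes the junk value `0`. -/
noncomputable def penalizedDiscrepancy (w τ : K → ℝ) (Δ : K → E) : ℝ :=
  ⨆ k, (‖Δ k‖ - τ k) / w k

lemma norm_sub_div_le_iff {k : K} (hw : 0 < w k) :
    (‖Δ k‖ - τ k) / w k ≤ B ↔ ‖Δ k‖ ≤ B * w k + τ k := by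
  rw [div_le_iff₀ hw, sub_le_iff_le_add]

lemma penalizedDiscrepancy_le_iff [Nonempty K] (hw : ∀ k, 0 < w k)
    (hΔ : ∀ k, ‖Δ k‖ ≤ A * w k + τ k) :
    penalizedDiscrepancy w τ Δ ≤ B ↔ ∀ k, ‖Δ k‖ ≤ B * w k + τ k := by
  have hbdd : BddAbove (Set.range fun k => (‖Δ k‖ - τ k) / w k) :=
    ⟨A, Set.forall_mem_range.2 fun k => (norm_sub_div_le_iff (hw k)).2 (hΔ k)⟩
  exact (ciSup_le_iff hbdd).trans (forall_congr' fun k => norm_sub_div_le_iff (hw k))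

lemma norm_sub_le_of_penalizedDiscrepancy_le (hw : ∀ k, 0 < w k)
    (hΔ : ∀ k, ‖Δ k‖ ≤ A * w k + τ k) (hΔ₀ : ∀ k, ‖Δ₀ k‖ ≤ B * w k + τ k)
    (hle : penalizedDiscrepancy w τ Δ ≤ penalizedDiscrepancy w τ Δ₀) (k : K) :
    ‖Δ k - Δ₀ k‖ ≤ 2 * (B * w k + τ k) := by
  have : Nonempty K := ⟨k⟩
  have hΔB : ‖Δ k‖ ≤ B * w k + τ k :=
    (penalizedDiscrepancy_le_iff hw hΔ).1
      (hle.trans ((penalizedDiscrepancy_le_iff hw hΔ₀).2 hΔ₀)) k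
  linarith [norm_sub_le (Δ k) (Δ₀ k), hΔ₀ k]

end PenalizedDiscrepancy

section Pairing

variable {α : Type*} [MeasurableSpace α] {μ : Measure α} {p q : ℝ≥0∞}

lemma norm_integral_smul_le_toReal_eLpNorm_mul {R E : Type*} [NormedRing R]
    [NormedAddCommGroup E] [NormedSpace ℝ E] [Module R E] [IsBoundedSMul R E]
    [q.HolderConjugate p] {ψ : α → R} {g : α → E} (hψ : MemLp ψ q μ) (hg : MemLp g p μ) :
    ‖∫ x, ψ x • g x ∂μ‖ ≤ (eLpNorm ψ q μ).toReal * (eLpNorm g p μ).toReal := by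
  rw [← toReal_enorm, ← ENNReal.toReal_mul]
  refine ENNReal.toReal_mono (ENNReal.mul_ne_top hψ.eLpNorm_ne_top hg.eLpNorm_ne_top) ?_
  calc ‖∫ x, ψ x • g x ∂μ‖ₑ
      ≤ ∫⁻ x, ‖ψ x • g x‖ₑ ∂μ := enorm_integral_le_lintegral_enorm _
    _ = eLpNorm (ψ • g) 1 μ := eLpNorm_one_eq_lintegral_enorm.symm
    _ ≤ eLpNorm ψ q μ * eLpNorm g p μ := eLpNorm_smul_le_mul_eLpNorm hg.1 hψ.1

variable {𝕜 : Type*} [RCLike 𝕜]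

/-- The observation `∫ ψ g + η` of a function `g` through the probe `ψ` with noise `η`; the residual
`Δ_i(ψ)` is the case `g = f - f_i`, `η = ε z(ψ)`. -/
noncomputable def noisyPairing (μ : Measure α) (ψ : α → 𝕜) (η : 𝕜) (g : α → 𝕜) : 𝕜 :=
  (∫ x, ψ x * g x ∂μ) + η

lemma norm_noisyPairing_le [q.HolderConjugate p] {ψ g : α → 𝕜} {η : 𝕜} {τ : ℝ}
    (hψ : MemLp ψ q μ) (hg : MemLp g p μ) (hη : ‖η‖ ≤ τ) :
    ‖noisyPairing μ ψ η g‖ ≤ (eLpNorm g p μ).toReal * (eLpNorm ψ q μ).toReal + τ := by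
  rw [mul_comm]
  exact norm_add_le_of_le (norm_integral_smul_le_toReal_eLpNorm_mul hψ hg) hη

lemma noisyPairing_sub_noisyPairing [q.HolderConjugate p] {ψ g h : α → 𝕜} (η : 𝕜)
    (hψ : MemLp ψ q μ) (hg : MemLp g p μ) (hh : MemLp h p μ) :
    noisyPairing μ ψ η g - noisyPairing μ ψ η h = ∫ x, ψ x * (g - h) x ∂μ := by
  simp only [noisyPairing, add_sub_add_right_eq_sub, Pi.sub_apply, mul_sub]
  exact (integral_sub (hψ.integrable_mul hg) (hψ.integrable_mul hh)).symm

end Pairing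

section Selection

variable {α K 𝕜 : Type*} [MeasurableSpace α] {μ : Measure α} [RCLike 𝕜] {p q : ℝ≥0∞}
  [q.HolderConjugate p] {ψ : K → α → 𝕜} {η : K → 𝕜} {τ : K → ℝ} {f : α → 𝕜} {γ : ℝ}

theorem toReal_eLpNorm_sub_le_of_penalizedDiscrepancy_le {f₀ f₁ : α → 𝕜}
    (hf : MemLp f p μ) (hf₀ : MemLp f₀ p μ) (hf₁ : MemLp f₁ p μ)
    (hψ : ∀ k, MemLp (ψ k) q μ) (hψpos : ∀ k, 0 < (eLpNorm (ψ k) q μ).toReal)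
    (hη : ∀ k, ‖η k‖ ≤ τ k)
    (hle : penalizedDiscrepancy (fun k => (eLpNorm (ψ k) q μ).toReal) τ
        (fun k => noisyPairing μ (ψ k) (η k) (f - f₁)) ≤
      penalizedDiscrepancy (fun k => (eLpNorm (ψ k) q μ).toReal) τ
        (fun k => noisyPairing μ (ψ k) (η k) (f - f₀)))
    {k : K} (hk : (eLpNorm (f₀ - f₁) p μ).toReal ≤ ‖∫ x, ψ k x * (f₀ - f₁) x ∂μ‖ + γ) :
    (eLpNorm (f₀ - f₁) p μ).toReal ≤
      2 * (eLpNorm (ψ k) q μ).toReal * (eLpNorm (f - f₀) p μ).toReal + 2 * τ k + γ := by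
  have hdiff := noisyPairing_sub_noisyPairing (η k) (hψ k) (hf.sub hf₁) (hf.sub hf₀)
  rw [sub_sub_sub_cancel_left] at hdiff
  have hpair := norm_sub_le_of_penalizedDiscrepancy_le hψpos
    (fun k => norm_noisyPairing_le (hψ k) (hf.sub hf₁) (hη k))
    (fun k => norm_noisyPairing_le (hψ k) (hf.sub hf₀) (hη k)) hle k
  rw [hdiff] at hpair
  linarith

theorem stmt_2_general {ι : Type*} {F : ι → α → 𝕜} {i₀ i₁ : ι} {rep : ι → K}
    (hf : MemLp f p μ) (hF : ∀ i, MemLp (F i) p μ)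
    (hψ : ∀ k, MemLp (ψ k) q μ) (hψpos : ∀ k, 0 < (eLpNorm (ψ k) q μ).toReal)
    (hη : ∀ k, ‖η k‖ ≤ τ k) (hγ : 0 ≤ γ)
    (hrep : ∀ j ≠ i₀,
      (eLpNorm (F i₀ - F j) p μ).toReal ≤ ‖∫ x, ψ (rep j) x * (F i₀ - F j) x ∂μ‖ + γ)
    (hrepq : BddAbove (Set.range fun j : {j // j ≠ i₀} => (eLpNorm (ψ (rep j)) q μ).toReal))
    (hrepτ : BddAbove (Set.range fun j : {j // j ≠ i₀} => τ (rep j)))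
    (hle : penalizedDiscrepancy (fun k => (eLpNorm (ψ k) q μ).toReal) τ
        (fun k => noisyPairing μ (ψ k) (η k) (f - F i₁)) ≤
      penalizedDiscrepancy (fun k => (eLpNorm (ψ k) q μ).toReal) τ
        (fun k => noisyPairing μ (ψ k) (η k) (f - F i₀))) :
    (eLpNorm (F i₀ - F i₁) p μ).toReal ≤
      2 * (⨆ j : {j // j ≠ i₀}, (eLpNorm (ψ (rep j)) q μ).toReal) *
          (eLpNorm (f - F i₀) p μ).toReal
        + 2 * (⨆ j : {j // j ≠ i₀}, τ (rep j)) + γ := by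
  obtain rfl | hne := eq_or_ne i₁ i₀
  · have hq : 0 ≤ ⨆ j : {j // j ≠ i₁}, (eLpNorm (ψ (rep j)) q μ).toReal :=
      Real.iSup_nonneg fun _ => ENNReal.toReal_nonneg
    have hτ : 0 ≤ ⨆ j : {j // j ≠ i₁}, τ (rep j) :=
      Real.iSup_nonneg fun j => (norm_nonneg _).trans (hη (rep j))
    rw [sub_self, eLpNorm_zero, ENNReal.toReal_zero]
    positivity
  · calc (eLpNorm (F i₀ - F i₁) p μ).toReal
        ≤ 2 * (eLpNorm (ψ (rep i₁)) q μ).toReal * (eLpNorm (f - F i₀) p μ).toReal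
            + 2 * τ (rep i₁) + γ :=
          toReal_eLpNorm_sub_le_of_penalizedDiscrepancy_le hf (hF i₀) (hF i₁) hψ hψpos hη hle
            (hrep i₁ hne)
      _ ≤ _ := by
          gcongr
          · exact le_ciSup hrepq ⟨i₁, hne⟩
          · exact le_ciSup hrepτ ⟨i₁, hne⟩

end Selection

/-- deterministic bound on the distance between the selected and
the oracle estimator for a `(γ,p)`-good probe set. -/
theorem stmt_2
    {d N : ℕ} (hd : 1 ≤ d) (hN : 2 ≤ N)
    (p q : ℝ≥0∞) (hp : 1 ≤ p) (hpq : 1 / p + 1 / q = 1)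
    (γ : ℝ) (hγ : 0 ≤ γ)
    (f : (Fin d → ℝ) → ℝ) (F : Fin N → (Fin d → ℝ) → ℝ)
    (hfm : Measurable f) (hFm : ∀ i, Measurable (F i))
    (hf : eLpNorm f p (cubeMeasure d) ≠ ⊤)
    (hF : ∀ i, eLpNorm (F i) p (cubeMeasure d) ≠ ⊤)
    (hFdist : ∀ i j, i ≠ j → F i ≠ F j)
    {K : Type} [Fintype K] [Nonempty K]
    (ψ : K → (Fin d → ℝ) → ℝ) (hψm : ∀ k, Measurable (ψ k))
    (hψq : ∀ k, eLpNorm (ψ k) q (cubeMeasure d) ≠ ⊤)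
    (hψ2 : ∀ k, eLpNorm (ψ k) 2 (cubeMeasure d) ≠ ⊤)
    (hψpos : ∀ k, 0 < Lnorm q (ψ k))
    (rep : Fin N → Fin N → K)
    (hgood : ∀ i j, i ≠ j →
      |(∫ t, ψ (rep i j) t * (F i t - F j t) ∂(cubeMeasure d)) -
        Lnorm p (fun t => F i t - F j t)| ≤ γ)
    (ε κ : ℝ) (hε : 0 < ε) (hκpos : 0 < κ)
    (z : K → ℝ) (hz : ∀ k, |z k| ≤ κ * Lnorm 2 (ψ k))
    (Δ : Fin N → K → ℝ)
    (hΔ : ∀ i k, Δ i k =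
      (∫ t, ψ k t * (f t - F i t) ∂(cubeMeasure d)) + ε * z k)
    (Mhat : Fin N → ℝ)
    (hM : ∀ i, Mhat i = ⨆ k, (|Δ i k| - ε * κ * Lnorm 2 (ψ k)) / Lnorm q (ψ k))
    (ihat : Fin N) (hmin : ∀ i, Mhat ihat ≤ Mhat i)
    (istar : Fin N)
    (histar : ∀ i, Lnorm p (fun t => f t - F istar t) ≤ Lnorm p (fun t => f t - F i t)) :
    Lnorm p (fun t => F istar t - F ihat t) ≤
      2 * (⨆ j : {j : Fin N // j ≠ istar}, Lnorm q (ψ (rep istar j.1))) *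
          Lnorm p (fun t => f t - F istar t)
        + 2 * ε * κ * (⨆ j : {j : Fin N // j ≠ istar}, Lnorm 2 (ψ (rep istar j.1)))
        + γ := by
  have : q.HolderConjugate p :=
    ENNReal.holderConjugate_iff.2 (by rw [add_comm, ← one_div, ← one_div, hpq])
  have hη (k : K) : ‖ε * z k‖ ≤ ε * κ * Lnorm 2 (ψ k) := by
    rw [norm_mul, Real.norm_of_nonneg hε.le, mul_assoc]
    exact mul_le_mul_of_nonneg_left (hz k) hε.le
  have hrep (j : Fin N) (hj : j ≠ istar) : Lnorm p (fun t => F istar t - F j t) ≤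
      ‖∫ t, ψ (rep istar j) t * (F istar t - F j t) ∂(cubeMeasure d)‖ + γ :=
    (Real.le_norm_self _).trans <| (norm_le_insert _ _).trans <| by
      gcongr; exact hgood istar j hj.symm
  have hle := hmin istar
  simp only [hM, hΔ] at hle
  rw [mul_assoc 2 ε κ, mul_assoc 2 (ε * κ), Real.mul_iSup_of_nonneg (mul_pos hε hκpos).le]
  exact stmt_2_general ⟨hfm.aestronglyMeasurable, hf.lt_top⟩
    (fun i => ⟨(hFm i).aestronglyMeasurable, (hF i).lt_top⟩)
    (fun k => ⟨(hψm k).aestronglyMeasurable, (hψq k).lt_top⟩) hψpos hη hγ hrep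
    (Set.finite_range _).bddAbove (Set.finite_range _).bddAbove hle
end

section
/- Let p ∈ [1,∞] and suppose the probe set is Ψ̂ := {ψ_g : g ∈ G} with ψ_g := (‖g‖_p/‖g‖_2²)·g (so that ∫ψ_g g = ‖g‖_p for every g ∈ G). Run the aggregation procedure of the context with δ = ε and κ = √(2 ln(N²/ε)). Then E‖f̂ − f‖_p ≤ (2Q₂(p) + 1)·min_{i∈I_N} ‖f_i − f‖_p + 2Q₃(p)·ε·√(2 ln(N²/ε)) + 2Lε, where Q₂(p) = max_{i∈I_N, i≠i*} ‖f_{i*} − f_i‖_p·‖f_{i*} − f_i‖_q/‖f_{i*} − f_i‖_2² and Q₃(p) = max_{i∈I_N, i≠i*} ‖f_{i*} − f_i‖_p/‖f_{i*} − f_i‖_2. -/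
open MeasureTheory
open scoped ENNReal

/-!
The probe `ψ_g` norms `g`, so for every candidate `j` the distance `‖f_{i₀} - f_j‖_p` is the
difference of the two inner products `∫ ψ (f - f_j)` and `∫ ψ (f - f_{i₀})`, where `ψ` is the probe
of `f_{i₀} - f_j`. When `|Z(ψ)| ≤ κ ‖ψ‖₂` for all probes, Hölder's inequality bounds the statistic
of `f_{i₀}` by `‖f - f_{i₀}‖_p`; the selected candidate has no larger statistic, which controls
`∫ ψ (f - f_j)` for `j = î`, and the triangle inequality gives the oracle bound. By a union bound
over the `N²` pairs this event fails with probability at most `N² exp(-κ² / 2) = ε`, and then the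
loss is still at most `2L`.
-/

section LpNorm

variable {α : Type*} [MeasurableSpace α] {μ : Measure α} {p q : ℝ≥0∞} {f g : α → ℝ}

theorem abs_integral_mul_le_lpNorm_mul_lpNorm [p.HolderConjugate q]
    (hf : MemLp f p μ) (hg : MemLp g q μ) :
    |∫ t, f t * g t ∂μ| ≤ lpNorm f p μ * lpNorm g q μ := by
  have hfg : AEStronglyMeasurable (f • g) μ := hf.1.smul hg.1
  calc |∫ t, f t * g t ∂μ| ≤ ∫ t, ‖(f • g) t‖ ∂μ :=
      norm_integral_le_integral_norm (f • g)
    _ = (eLpNorm (f • g) 1 μ).toReal := by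
      rw [toReal_eLpNorm hfg, lpNorm_one_eq_integral_norm hfg]
    _ ≤ (eLpNorm f p μ * eLpNorm g q μ).toReal :=
      ENNReal.toReal_mono (ENNReal.mul_ne_top hf.2.ne hg.2.ne)
        (eLpNorm_smul_le_mul_eLpNorm hg.1 hf.1)
    _ = lpNorm f p μ * lpNorm g q μ := by
      rw [ENNReal.toReal_mul, toReal_eLpNorm hf.1, toReal_eLpNorm hg.1]

theorem integral_mul_self_eq_lpNorm_two_sq (hf : AEStronglyMeasurable f μ) :
    ∫ t, f t * f t ∂μ = lpNorm f 2 μ ^ 2 := by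
  have h_nonneg : 0 ≤ ∫ t, f t ^ 2 ∂μ := integral_nonneg fun t => sq_nonneg (f t)
  rw [lpNorm_eq_integral_norm_rpow_toReal two_ne_zero ENNReal.ofNat_ne_top hf]
  simp [← pow_two, ← Real.sqrt_eq_rpow, ← one_div, Real.sq_sqrt h_nonneg]

theorem lpNorm_pos_of_not_ae_eq_zero (hf : MemLp f p μ) (hp : p ≠ 0) (hf0 : ¬ f =ᵐ[μ] 0) :
    0 < lpNorm f p μ :=
  lpNorm_nonneg.lt_of_ne' (mt (lpNorm_eq_zero hf hp).1 hf0)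

end LpNorm

namespace Aggregation

section Probe

variable {α : Type*} [MeasurableSpace α] {μ : Measure α} {p r : ℝ≥0∞} {g : α → ℝ}

/-- The probe function `ψ_g = (‖g‖_p / ‖g‖₂²) g`, scaled so that `∫ ψ_g g = ‖g‖_p`. -/
noncomputable def probe (g : α → ℝ) (p : ℝ≥0∞) (μ : Measure α) : α → ℝ :=
  (lpNorm g p μ / lpNorm g 2 μ ^ 2) • g

theorem probe_neg : probe (-g) p μ = -probe g p μ := by
  simp [probe]

theorem memLp_probe (hg : MemLp g r μ) : MemLp (probe g p μ) r μ :=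
  hg.const_smul _

theorem lpNorm_probe :
    lpNorm (probe g p μ) r μ = lpNorm g p μ * lpNorm g r μ / lpNorm g 2 μ ^ 2 := by
  have h_nonneg : 0 ≤ lpNorm g p μ / lpNorm g 2 μ ^ 2 :=
    div_nonneg lpNorm_nonneg (sq_nonneg _)
  rw [probe, lpNorm_const_smul, coe_nnnorm, Real.norm_of_nonneg h_nonneg, div_mul_eq_mul_div]

theorem lpNorm_two_probe : lpNorm (probe g p μ) 2 μ = lpNorm g p μ / lpNorm g 2 μ := by
  rw [lpNorm_probe, mul_div_assoc, pow_two, div_self_mul_self', div_eq_mul_inv]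

theorem lpNorm_probe_pos (hp : p ≠ 0) (hr : r ≠ 0) (hgp : MemLp g p μ) (hg2 : MemLp g 2 μ)
    (hgr : MemLp g r μ) (hg0 : ¬ g =ᵐ[μ] 0) : 0 < lpNorm (probe g p μ) r μ := by
  rw [lpNorm_probe]
  exact div_pos
    (mul_pos (lpNorm_pos_of_not_ae_eq_zero hgp hp hg0) (lpNorm_pos_of_not_ae_eq_zero hgr hr hg0))
    (pow_pos (lpNorm_pos_of_not_ae_eq_zero hg2 two_ne_zero hg0) 2)

theorem integral_probe_mul_self (hg2 : MemLp g 2 μ) (hg0 : ¬ g =ᵐ[μ] 0) :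
    ∫ t, probe g p μ t * g t ∂μ = lpNorm g p μ := by
  have hpos := lpNorm_pos_of_not_ae_eq_zero hg2 two_ne_zero hg0
  simp only [probe, Pi.smul_apply, smul_eq_mul, mul_assoc]
  rw [integral_const_mul, integral_mul_self_eq_lpNorm_two_sq hg2.1,
    div_mul_cancel₀ _ (pow_pos hpos 2).ne']

end Probe

section Discrepancy

variable {α K : Type*} [MeasurableSpace α] {μ : Measure α} {p q : ℝ≥0∞}
  {ψ : K → α → ℝ} {τ z : K → ℝ} {u v : α → ℝ}

/-- The statistic `M̂` of a candidate with residual `h = f - f_i`: the largest normalised excess of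
the observed inner products `∫ ψ_k h + z_k` over the thresholds `τ_k`, where `z` is the realised
noise. The paper takes `z_k = ε Z(ψ_k)` and `τ_k = ε κ ‖ψ_k‖₂`. -/
noncomputable def discrepancy (ψ : K → α → ℝ) (τ z : K → ℝ) (q : ℝ≥0∞) (μ : Measure α)
    (h : α → ℝ) : ℝ :=
  ⨆ k, (|(∫ t, ψ k t * h t ∂μ) + z k| - τ k) / lpNorm (ψ k) q μ

theorem discrepancy_le_lpNorm [p.HolderConjugate q] (hψ : ∀ k, MemLp (ψ k) q μ)
    (hz : ∀ k, |z k| ≤ τ k) (hu : MemLp u p μ) :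
    discrepancy ψ τ z q μ u ≤ lpNorm u p μ := by
  refine Real.iSup_le (fun k => div_le_of_le_mul₀ lpNorm_nonneg lpNorm_nonneg ?_) lpNorm_nonneg
  have h_holder := abs_integral_mul_le_lpNorm_mul_lpNorm (hψ k) hu
  linarith [abs_add_le (∫ t, ψ k t * u t ∂μ) (z k), hz k]

theorem integral_add_le_of_discrepancy_le [Finite K] {m : ℝ} {k : K}
    (hk : 0 < lpNorm (ψ k) q μ) (hv : discrepancy ψ τ z q μ v ≤ m) :
    (∫ t, ψ k t * v t ∂μ) + z k ≤ m * lpNorm (ψ k) q μ + τ k := by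
  have h_ratio := (le_ciSup (Set.finite_range _).bddAbove k).trans hv
  have h_abs := (div_le_iff₀ hk).1 h_ratio
  linarith [le_abs_self ((∫ t, ψ k t * v t ∂μ) + z k)]

theorem lpNorm_le_of_discrepancy_le [p.HolderConjugate q] [Finite K] {k : K}
    (hψ : ∀ k, MemLp (ψ k) q μ) (hz : ∀ k, |z k| ≤ τ k)
    (hu : MemLp u p μ) (hv : MemLp v p μ) (huv : discrepancy ψ τ z q μ v ≤ discrepancy ψ τ z q μ u)
    (hk : 0 < lpNorm (ψ k) q μ) (hsep : lpNorm (v - u) p μ ≤ ∫ t, ψ k t * (v - u) t ∂μ) :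
    lpNorm v p μ ≤ (2 * lpNorm (ψ k) q μ + 1) * lpNorm u p μ + 2 * τ k := by
  have h_split : ∫ t, ψ k t * (v - u) t ∂μ = (∫ t, ψ k t * v t ∂μ) - ∫ t, ψ k t * u t ∂μ := by
    simp only [Pi.sub_apply, mul_sub]
    exact integral_sub ((hψ k).integrable_mul hv) ((hψ k).integrable_mul hu)
  have h_v := integral_add_le_of_discrepancy_le hk (huv.trans (discrepancy_le_lpNorm hψ hz hu))
  have h_u := neg_le_of_abs_le (abs_integral_mul_le_lpNorm_mul_lpNorm (hψ k) hu)
  have h_tri := lpNorm_le_lpNorm_add_lpNorm_sub' (f := v) hu (ENNReal.HolderConjugate.one_le p q)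
  linarith [neg_le_of_abs_le (hz k)]

end Discrepancy

section Noise

open ProbabilityTheory
open scoped NNReal

variable {Ω K : Type*} [MeasurableSpace Ω] {P : Measure Ω}

theorem hasSubgaussianMGF_of_map_eq_gaussianReal {X : Ω → ℝ} {v : ℝ≥0} (hX : AEMeasurable X P)
    (h : P.map X = gaussianReal 0 v) : HasSubgaussianMGF X v P := by
  refine (HasSubgaussianMGF.id_map_iff hX).1 ?_
  rw [h]
  exact ⟨integrable_exp_mul_gaussianReal, fun t => by simp [mgf_id_gaussianReal]⟩

theorem measureReal_mul_lt_le_exp [IsFiniteMeasure P] {X : Ω → ℝ} {s : ℝ≥0} {κ : ℝ} (hs : 0 < s)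
    (hκ : 0 ≤ κ) (hX : HasSubgaussianMGF X (s ^ 2) P) :
    P.real {ω | κ * s < X ω} ≤ Real.exp (-κ ^ 2 / 2) := by
  calc P.real {ω | κ * s < X ω} ≤ P.real {ω | κ * s ≤ X ω} :=
      measureReal_mono fun ω (hω : κ * s < X ω) => hω.le
    _ ≤ Real.exp (-(κ * s) ^ 2 / (2 * (s ^ 2 : ℝ≥0))) := hX.measure_ge_le (by positivity)
    _ = Real.exp (-κ ^ 2 / 2) := by push_cast; field_simp

theorem measureReal_exists_mul_lt_le [IsFiniteMeasure P] [Fintype K] {X : K → Ω → ℝ} {s : K → ℝ≥0}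
    {κ : ℝ} (hs : ∀ k, 0 < s k) (hκ : 0 ≤ κ) (hX : ∀ k, HasSubgaussianMGF (X k) (s k ^ 2) P) :
    P.real {ω | ∃ k, κ * s k < X k ω} ≤ Fintype.card K * Real.exp (-κ ^ 2 / 2) := by
  calc P.real {ω | ∃ k, κ * s k < X k ω} = P.real (⋃ k, {ω | κ * s k < X k ω}) := by
        rw [Set.ofPred_exists]
    _ ≤ ∑ k, P.real {ω | κ * s k < X k ω} := measureReal_iUnion_fintype_le _
    _ ≤ ∑ _k : K, Real.exp (-κ ^ 2 / 2) :=
      Finset.sum_le_sum fun k _ => measureReal_mul_lt_le_exp (hs k) hκ (hX k)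
    _ = Fintype.card K * Real.exp (-κ ^ 2 / 2) := by simp

theorem measureReal_exists_mul_lt_abs_le [IsFiniteMeasure P] {ι : Type*} [Fintype ι]
    {Z : ι → ι → Ω → ℝ} {s : ι → ι → ℝ≥0} {κ : ℝ} (hs : Pairwise fun i j => 0 < s i j)
    (hs_symm : ∀ i j, s j i = s i j) (hκ : 0 ≤ κ)
    (hZ : Pairwise fun i j => HasSubgaussianMGF (Z i j) (s i j ^ 2) P)
    (hZ_anti : Pairwise fun i j => ∀ᵐ ω ∂P, Z j i ω = -Z i j ω) :
    P.real {ω | ∃ i j, i ≠ j ∧ κ * s i j < |Z i j ω|} ≤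
      Fintype.card ι ^ 2 * Real.exp (-κ ^ 2 / 2) := by
  classical
  let X : {ij : ι × ι // ij.1 ≠ ij.2} → Ω → ℝ := fun k => Z k.1.1 k.1.2
  have h_one_sided : P {ω | ∃ i j, i ≠ j ∧ κ * s i j < |Z i j ω|} ≤
      P {ω | ∃ k, κ * s k.1.1 k.1.2 < X k ω} := by
    refine measure_mono_ae ?_
    have h_anti : ∀ᵐ ω ∂P, ∀ i j, i ≠ j → Z j i ω = -Z i j ω := by
      simpa only [ae_all_iff] using fun i j hij => hZ_anti hij
    filter_upwards [h_anti] with ω hω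
    rintro ⟨i, j, hij, hlt⟩
    rcases lt_abs.1 hlt with hpos | hneg
    · exact ⟨⟨(i, j), hij⟩, hpos⟩
    · exact ⟨⟨(j, i), hij.symm⟩, by simpa [X, hs_symm i j, hω i j hij] using hneg⟩
  have h_card : Fintype.card {ij : ι × ι // ij.1 ≠ ij.2} ≤ Fintype.card ι ^ 2 := by
    rw [pow_two, ← Fintype.card_prod]
    exact Fintype.card_subtype_le fun ij : ι × ι => ij.1 ≠ ij.2
  calc P.real {ω | ∃ i j, i ≠ j ∧ κ * s i j < |Z i j ω|}
      ≤ P.real {ω | ∃ k, κ * s k.1.1 k.1.2 < X k ω} :=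
        ENNReal.toReal_mono (measure_ne_top P _) h_one_sided
    _ ≤ Fintype.card {ij : ι × ι // ij.1 ≠ ij.2} * Real.exp (-κ ^ 2 / 2) :=
      measureReal_exists_mul_lt_le (fun k => hs k.2) hκ fun k => hZ k.2
    _ ≤ Fintype.card ι ^ 2 * Real.exp (-κ ^ 2 / 2) := by gcongr; exact_mod_cast h_card

theorem mul_exp_neg_sqrt_two_mul_log_div_sq {a ε : ℝ} (hε : 0 < ε) (hεa : ε ≤ a) :
    a * Real.exp (-√(2 * Real.log (a / ε)) ^ 2 / 2) = ε := by
  have h_log : 0 ≤ Real.log (a / ε) := Real.log_nonneg ((one_le_div hε).2 hεa)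
  have ha : 0 < a := hε.trans_le hεa
  rw [Real.sq_sqrt (by positivity), neg_div, mul_div_cancel_left₀ _ two_ne_zero, Real.exp_neg,
    Real.exp_log (by positivity), inv_div, mul_div_cancel₀ _ ha.ne']

theorem integral_le_add_mul_measureReal_lt [IsProbabilityMeasure P] {X : Ω → ℝ} {B C : ℝ}
    (hX : Integrable X P) (hXC : ∀ᵐ ω ∂P, X ω ≤ B + C) :
    ∫ ω, X ω ∂P ≤ B + C * P.real {ω | B < X ω} := by
  have h_null : NullMeasurableSet {ω | B < X ω} P :=
    nullMeasurableSet_lt aemeasurable_const hX.aemeasurable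
  have h_ind : Integrable ({ω | B < X ω}.indicator fun _ => C) P :=
    (integrable_const C).indicator₀ h_null
  calc ∫ ω, X ω ∂P ≤ ∫ ω, (B + {ω | B < X ω}.indicator (fun _ => C) ω) ∂P := by
        refine integral_mono_ae hX ((integrable_const B).add h_ind) ?_
        filter_upwards [hXC] with ω hω
        by_cases hB : B < X ω <;> simp_all
    _ = B + C * P.real {ω | B < X ω} := by
        rw [integral_add (integrable_const B) h_ind, integral_indicator₀ h_null]
        simp [mul_comm]

end Noise

section Oracle

variable {α ι : Type*} [MeasurableSpace α] {μ : Measure α} {p q : ℝ≥0∞}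
  {f : α → ℝ} {F : ι → α → ℝ} {i₀ j : ι}

/-- The probe set `Ψ̂` of the paper, indexed by the ordered pairs of distinct candidates. -/
noncomputable def pairProbe (F : ι → α → ℝ) (p : ℝ≥0∞) (μ : Measure α)
    (k : {ij : ι × ι // ij.1 ≠ ij.2}) : α → ℝ :=
  probe (F k.1.1 - F k.1.2) p μ

/-- The statistic `M̂_i` minimised by the aggregation procedure, at noise level `σ`, threshold
factor `κ` and noise realisation `ζ`, where `ζ i j` is the value of `Z(ψ_{ij})`. -/
noncomputable def selectionStat (f : α → ℝ) (F : ι → α → ℝ) (p q : ℝ≥0∞) (μ : Measure α)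
    (σ κ : ℝ) (ζ : ι → ι → ℝ) (i : ι) : ℝ :=
  discrepancy (pairProbe F p μ) (fun k => σ * κ * lpNorm (pairProbe F p μ k) 2 μ)
    (fun k => σ * ζ k.1.1 k.1.2) q μ (f - F i)

/-- The constant `Q₂(p)` of the paper relative to the reference candidate `i₀`: the largest
`L^q` norm of a probe separating `i₀` from another candidate. -/
noncomputable def Q₂ (F : ι → α → ℝ) (i₀ : ι) (p q : ℝ≥0∞) (μ : Measure α) : ℝ :=
  ⨆ j : {j // j ≠ i₀},
    lpNorm (F i₀ - F j) p μ * lpNorm (F i₀ - F j) q μ / lpNorm (F i₀ - F j) 2 μ ^ 2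

/-- The constant `Q₃(p)` of the paper relative to the reference candidate `i₀`: the largest
`L²` norm of a probe separating `i₀` from another candidate. -/
noncomputable def Q₃ (F : ι → α → ℝ) (i₀ : ι) (p : ℝ≥0∞) (μ : Measure α) : ℝ :=
  ⨆ j : {j // j ≠ i₀}, lpNorm (F i₀ - F j) p μ / lpNorm (F i₀ - F j) 2 μ

theorem Q₂_nonneg : 0 ≤ Q₂ F i₀ p q μ :=
  Real.iSup_nonneg fun _ =>
    div_nonneg (mul_nonneg lpNorm_nonneg lpNorm_nonneg) (sq_nonneg _)

theorem Q₃_nonneg : 0 ≤ Q₃ F i₀ p μ :=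
  Real.iSup_nonneg fun _ => div_nonneg lpNorm_nonneg lpNorm_nonneg

theorem lpNorm_probe_le_Q₂ [Finite ι] (hj : j ≠ i₀) :
    lpNorm (probe (F i₀ - F j) p μ) q μ ≤ Q₂ F i₀ p q μ := by
  rw [lpNorm_probe]
  exact le_ciSup (f := fun j : {j // j ≠ i₀} => lpNorm (F i₀ - F j) p μ *
    lpNorm (F i₀ - F j) q μ / lpNorm (F i₀ - F j) 2 μ ^ 2) (Set.finite_range _).bddAbove ⟨j, hj⟩

theorem lpNorm_two_probe_le_Q₃ [Finite ι] (hj : j ≠ i₀) :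
    lpNorm (probe (F i₀ - F j) p μ) 2 μ ≤ Q₃ F i₀ p μ := by
  rw [lpNorm_two_probe]
  exact le_ciSup (f := fun j : {j // j ≠ i₀} => lpNorm (F i₀ - F j) p μ /
    lpNorm (F i₀ - F j) 2 μ) (Set.finite_range _).bddAbove ⟨j, hj⟩

theorem lpNorm_sub_le_of_selectionStat_le [p.HolderConjugate q] [Finite ι]
    {σ κ : ℝ} {ζ : ι → ι → ℝ} (hf : MemLp f p μ) (hF : ∀ i, MemLp (F i) p μ)
    (hF2 : Pairwise fun i j => MemLp (F i - F j) 2 μ)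
    (hFq : Pairwise fun i j => MemLp (F i - F j) q μ)
    (hF_ne : Pairwise fun i j => ¬ F i =ᵐ[μ] F j) (hσ : 0 ≤ σ) (hκ : 0 ≤ κ)
    (hζ : ∀ i j, i ≠ j → |ζ i j| ≤ κ * lpNorm (probe (F i - F j) p μ) 2 μ)
    (hj : selectionStat f F p q μ σ κ ζ j ≤ selectionStat f F p q μ σ κ ζ i₀) :
    lpNorm (F j - f) p μ ≤
      (2 * Q₂ F i₀ p q μ + 1) * lpNorm (F i₀ - f) p μ + 2 * Q₃ F i₀ p μ * σ * κ := by
  have hQ₂ : 0 ≤ Q₂ F i₀ p q μ := Q₂_nonneg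
  have hQ₃ : 0 ≤ Q₃ F i₀ p μ := Q₃_nonneg
  have h_nonneg : 0 ≤ lpNorm (F i₀ - f) p μ := lpNorm_nonneg
  rcases eq_or_ne j i₀ with rfl | hne
  · linarith [mul_nonneg hQ₂ h_nonneg, mul_nonneg (mul_nonneg hQ₃ hσ) hκ]
  have hg0 : ¬ F i₀ - F j =ᵐ[μ] 0 := mt (sub_ae_eq_zero _ _).1 (hF_ne hne.symm)
  have hg2 := hF2 hne.symm
  have h_pos := lpNorm_probe_pos (ENNReal.HolderConjugate.ne_zero p q)
    (ENNReal.HolderConjugate.ne_zero q p) ((hF i₀).sub (hF j)) hg2 (hFq hne.symm) hg0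
  have h_sep : lpNorm ((f - F j) - (f - F i₀)) p μ ≤
      ∫ t, probe (F i₀ - F j) p μ t * ((f - F j) - (f - F i₀)) t ∂μ := by
    rw [sub_sub_sub_cancel_left, integral_probe_mul_self hg2 hg0]
  have h_noise (k : {ij : ι × ι // ij.1 ≠ ij.2}) :
      |σ * ζ k.1.1 k.1.2| ≤ σ * κ * lpNorm (pairProbe F p μ k) 2 μ := by
    rw [abs_mul, abs_of_nonneg hσ, mul_assoc]
    exact mul_le_mul_of_nonneg_left (hζ _ _ k.2) hσ
  unfold selectionStat at hj
  have h_oracle := lpNorm_le_of_discrepancy_le (ψ := pairProbe F p μ) (k := ⟨(i₀, j), hne.symm⟩)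
    (fun k => memLp_probe (hFq k.2)) h_noise (hf.sub (hF i₀)) (hf.sub (hF j)) hj h_pos h_sep
  rw [lpNorm_sub_comm f (F j), lpNorm_sub_comm f (F i₀)] at h_oracle
  calc lpNorm (F j - f) p μ
      ≤ (2 * lpNorm (probe (F i₀ - F j) p μ) q μ + 1) * lpNorm (F i₀ - f) p μ +
          2 * (σ * κ * lpNorm (probe (F i₀ - F j) p μ) 2 μ) := h_oracle
    _ ≤ (2 * Q₂ F i₀ p q μ + 1) * lpNorm (F i₀ - f) p μ + 2 * (σ * κ * Q₃ F i₀ p μ) := by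
      gcongr
      · exact lpNorm_probe_le_Q₂ hne
      · exact lpNorm_two_probe_le_Q₃ hne
    _ = _ := by ring

end Oracle

section Expectation

open ProbabilityTheory

variable {α ι Ω : Type*} [MeasurableSpace α] {μ : Measure α} [Fintype ι] [MeasurableSpace Ω]
  {P : Measure Ω} {p q : ℝ≥0∞} [p.HolderConjugate q] {f : α → ℝ} {F : ι → α → ℝ}

theorem measureReal_lt_lpNorm_sub_le [IsFiniteMeasure P] (hf : MemLp f p μ)
    (hF : ∀ i, MemLp (F i) p μ) (hF2 : Pairwise fun i j => MemLp (F i - F j) 2 μ)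
    (hFq : Pairwise fun i j => MemLp (F i - F j) q μ)
    (hF_ne : Pairwise fun i j => ¬ F i =ᵐ[μ] F j)
    {σ κ : ℝ} (hσ : 0 ≤ σ) (hκ : 0 ≤ κ) {Z : ι → ι → Ω → ℝ}
    (hZ : Pairwise fun i j =>
      HasSubgaussianMGF (Z i j) ((eLpNorm (probe (F i - F j) p μ) 2 μ).toNNReal ^ 2) P)
    (hZ_anti : Pairwise fun i j => ∀ᵐ ω ∂P, Z j i ω = -Z i j ω) {ihat : Ω → ι} {i₀ : ι}
    (hmin : ∀ᵐ ω ∂P, selectionStat f F p q μ σ κ (fun i j => Z i j ω) (ihat ω) ≤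
      selectionStat f F p q μ σ κ (fun i j => Z i j ω) i₀) :
    P.real {ω | (2 * Q₂ F i₀ p q μ + 1) * lpNorm (F i₀ - f) p μ + 2 * Q₃ F i₀ p μ * σ * κ <
        lpNorm (F (ihat ω) - f) p μ} ≤
      Fintype.card ι ^ 2 * Real.exp (-κ ^ 2 / 2) := by
  let s i j := (eLpNorm (probe (F i - F j) p μ) 2 μ).toNNReal
  have hs_coe i j : (s i j : ℝ) = lpNorm (probe (F i - F j) p μ) 2 μ :=
    toReal_eLpNorm (memLp_probe ((hF i).sub (hF j))).1
  have hs : Pairwise fun i j => 0 < s i j := fun i j hij => by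
    refine NNReal.coe_pos.1 ?_
    rw [hs_coe]
    exact lpNorm_probe_pos (ENNReal.HolderConjugate.ne_zero p q) two_ne_zero
      ((hF i).sub (hF j)) (hF2 hij) (hF2 hij) (mt (sub_ae_eq_zero _ _).1 (hF_ne hij))
  have hs_symm i j : s j i = s i j := by
    simp only [s, ← neg_sub (F i) (F j), probe_neg, eLpNorm_neg]
  refine le_trans (ENNReal.toReal_mono (measure_ne_top P _) (measure_mono_ae ?_))
    (measureReal_exists_mul_lt_abs_le hs hs_symm hκ hZ hZ_anti)
  filter_upwards [hmin] with ω hω hlt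
  by_contra h_noise
  have h_noise_le i j (hij : i ≠ j) : |Z i j ω| ≤ κ * lpNorm (probe (F i - F j) p μ) 2 μ :=
    hs_coe i j ▸ not_lt.1 fun h => h_noise ⟨i, j, hij, h⟩
  exact hlt.not_ge
    (lpNorm_sub_le_of_selectionStat_le hf hF hF2 hFq hF_ne hσ hκ h_noise_le hω)

end Expectation

section UnitCube

variable {d : ℕ} {p q r : ℝ≥0∞} {f g : (Fin d → ℝ) → ℝ}

theorem Lnorm_eq_lpNorm (hf : Measurable f) : Lnorm r f = lpNorm f r (cubeMeasure d) :=
  toReal_eLpNorm hf.aestronglyMeasurable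

theorem Lnorm_sub_eq_lpNorm (hf : Measurable f) (hg : Measurable g) :
    Lnorm r (fun t => f t - g t) = lpNorm (f - g) r (cubeMeasure d) :=
  Lnorm_eq_lpNorm (hf.sub hg)

theorem Lnorm_probe_sub_eq_lpNorm (hf : Measurable f) (hg : Measurable g) :
    Lnorm r (probe (f - g) p (cubeMeasure d)) =
      lpNorm (probe (f - g) p (cubeMeasure d)) r (cubeMeasure d) :=
  Lnorm_eq_lpNorm ((hf.sub hg).const_smul _)

theorem Lnorm_sub_comm (f g : (Fin d → ℝ) → ℝ) :
    Lnorm r (fun t => f t - g t) = Lnorm r (fun t => g t - f t) :=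
  congrArg ENNReal.toReal (eLpNorm_sub_comm f g r (cubeMeasure d))

theorem not_ae_eq_of_Lnorm_sub_pos (h : 0 < Lnorm r (fun t => f t - g t)) :
    ¬ f =ᵐ[cubeMeasure d] g := fun hfg =>
  (ENNReal.toReal_pos_iff.1 h).1.ne' (eLpNorm_eq_zero_of_ae_zero ((sub_ae_eq_zero f g).2 hfg))

theorem selectionStat_eq_iSup_Lnorm {ι : Type*} {F : ι → (Fin d → ℝ) → ℝ}
    {ψ : ι → ι → (Fin d → ℝ) → ℝ} {σ κ : ℝ} {ζ : ι → ι → ℝ} (hF : ∀ i, Measurable (F i))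
    (hψ : ∀ i j, i ≠ j → ψ i j = probe (F i - F j) p (cubeMeasure d)) (i : ι) :
    selectionStat f F p q (cubeMeasure d) σ κ ζ i =
      ⨆ jl : {jl : ι × ι // jl.1 ≠ jl.2},
        (|(∫ t, ψ jl.1.1 jl.1.2 t * (f t - F i t) ∂(cubeMeasure d)) + σ * ζ jl.1.1 jl.1.2| -
          σ * κ * Lnorm 2 (ψ jl.1.1 jl.1.2)) / Lnorm q (ψ jl.1.1 jl.1.2) := by
  refine iSup_congr fun jl => ?_
  simp only [hψ _ _ jl.2, Lnorm_probe_sub_eq_lpNorm (hF _) (hF _)]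
  rfl

end UnitCube

end Aggregation

open Aggregation ProbabilityTheory in
theorem stmt_4_general {α ι Ω : Type*} [MeasurableSpace α] {μ : Measure α} [Fintype ι]
    [MeasurableSpace ι] [DiscreteMeasurableSpace ι] [MeasurableSpace Ω] {P : Measure Ω}
    [IsProbabilityMeasure P] {p q : ℝ≥0∞} [p.HolderConjugate q] {f : α → ℝ} {F : ι → α → ℝ}
    (hf : MemLp f p μ) (hF : ∀ i, MemLp (F i) p μ)
    (hF2 : Pairwise fun i j => MemLp (F i - F j) 2 μ)
    (hFq : Pairwise fun i j => MemLp (F i - F j) q μ)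
    (hF_ne : Pairwise fun i j => ¬ F i =ᵐ[μ] F j)
    {L : ℝ} (hfL : lpNorm f p μ ≤ L) (hFL : ∀ i, lpNorm (F i) p μ ≤ L)
    {σ κ : ℝ} (hσ : 0 ≤ σ) (hκ : 0 ≤ κ) {Z : ι → ι → Ω → ℝ}
    (hZ : Pairwise fun i j =>
      HasSubgaussianMGF (Z i j) ((eLpNorm (probe (F i - F j) p μ) 2 μ).toNNReal ^ 2) P)
    (hZ_anti : Pairwise fun i j => ∀ᵐ ω ∂P, Z j i ω = -Z i j ω)
    {ihat : Ω → ι} (hihat : AEMeasurable ihat P) (i₀ : ι)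
    (hmin : ∀ᵐ ω ∂P, selectionStat f F p q μ σ κ (fun i j => Z i j ω) (ihat ω) ≤
      selectionStat f F p q μ σ κ (fun i j => Z i j ω) i₀) :
    ∫ ω, lpNorm (F (ihat ω) - f) p μ ∂P ≤
      (2 * Q₂ F i₀ p q μ + 1) * lpNorm (F i₀ - f) p μ + 2 * Q₃ F i₀ p μ * σ * κ +
        2 * L * (Fintype.card ι ^ 2 * Real.exp (-κ ^ 2 / 2)) := by
  set B := (2 * Q₂ F i₀ p q μ + 1) * lpNorm (F i₀ - f) p μ + 2 * Q₃ F i₀ p μ * σ * κ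
  have hB : 0 ≤ B := by
    have hQ₂ : 0 ≤ Q₂ F i₀ p q μ := Q₂_nonneg
    have hQ₃ : 0 ≤ Q₃ F i₀ p μ := Q₃_nonneg
    have h_nonneg : 0 ≤ lpNorm (F i₀ - f) p μ := lpNorm_nonneg
    positivity
  have hL : 0 ≤ L := lpNorm_nonneg.trans hfL
  have h_loss_le i : lpNorm (F i - f) p μ ≤ 2 * L := by
    linarith [lpNorm_sub_le (g := f) (hF i) (ENNReal.HolderConjugate.one_le p q), hFL i]
  have h_int : Integrable (fun ω => lpNorm (F (ihat ω) - f) p μ) P := by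
    have h_meas : Measurable fun i => lpNorm (F i - f) p μ := .of_discrete
    refine .of_bound (h_meas.comp_aemeasurable hihat).aestronglyMeasurable (2 * L)
      (.of_forall fun ω => ?_)
    rw [Real.norm_of_nonneg lpNorm_nonneg]
    exact h_loss_le (ihat ω)
  calc ∫ ω, lpNorm (F (ihat ω) - f) p μ ∂P
      ≤ B + 2 * L * P.real {ω | B < lpNorm (F (ihat ω) - f) p μ} :=
        integral_le_add_mul_measureReal_lt h_int
          (.of_forall fun ω => (h_loss_le (ihat ω)).trans (le_add_of_nonneg_left hB))
    _ ≤ B + 2 * L * (Fintype.card ι ^ 2 * Real.exp (-κ ^ 2 / 2)) := by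
        gcongr
        exact measureReal_lt_lpNorm_sub_le hf hF hF2 hFq hF_ne hσ hκ hZ hZ_anti hmin

open Aggregation in
/-- Corollary 2 of the paper: oracle inequality for the aggregation
procedure with the `(0,p)`-good probe set `Ψ̂ = {(‖g‖_p/‖g‖₂²)·g : g ∈ G}`,
`δ = ε` and `κ = √(2 ln(N²/ε))`. -/
theorem stmt_4
    {d N : ℕ} (hd : 1 ≤ d) (hN : 2 ≤ N)
    (p q : ℝ≥0∞) (hp : 1 ≤ p) (hpq : 1 / p + 1 / q = 1)
    (f : (Fin d → ℝ) → ℝ) (F : Fin N → (Fin d → ℝ) → ℝ)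
    (hfm : Measurable f) (hFm : ∀ i, Measurable (F i))
    (hf : eLpNorm f p (cubeMeasure d) ≠ ⊤)
    (hF : ∀ i, eLpNorm (F i) p (cubeMeasure d) ≠ ⊤)
    -- pairwise differences have nonzero finite `L²` norms and finite `L^p`, `L^q` norms
    (hFdist : ∀ i j, i ≠ j → 0 < Lnorm 2 (fun t => F i t - F j t))
    (hdiff2 : ∀ i j, i ≠ j → eLpNorm (fun t => F i t - F j t) 2 (cubeMeasure d) ≠ ⊤)
    (hdiffp : ∀ i j, i ≠ j → eLpNorm (fun t => F i t - F j t) p (cubeMeasure d) ≠ ⊤)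
    (hdiffq : ∀ i j, i ≠ j → eLpNorm (fun t => F i t - F j t) q (cubeMeasure d) ≠ ⊤)
    (L : ℝ) (hL : L = max (Lnorm p f) (⨆ i, Lnorm p (F i)))
    (ε : ℝ) (hε0 : 0 < ε) (hε1 : ε < 1)
    -- the probe functions `ψ_{ij} = (‖f_i - f_j‖_p / ‖f_i - f_j‖₂²)·(f_i - f_j)`
    (ψ : Fin N → Fin N → (Fin d → ℝ) → ℝ)
    (hψdef : ∀ i j, i ≠ j → ∀ t, ψ i j t =
      Lnorm p (fun u => F i u - F j u) / (Lnorm 2 (fun u => F i u - F j u)) ^ 2 *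
        (F i t - F j t))
    {Ω : Type} [MeasurableSpace Ω] (P : Measure Ω) [IsProbabilityMeasure P]
    (Z : Fin N → Fin N → Ω → ℝ) (hZm : ∀ i j, Measurable (Z i j))
    (hZlaw : ∀ i j, i ≠ j → Measure.map (Z i j) P =
      ProbabilityTheory.gaussianReal 0 ((eLpNorm (ψ i j) 2 (cubeMeasure d)).toNNReal ^ 2))
    (hZanti : ∀ i j, i ≠ j → ∀ᵐ ω ∂P, Z j i ω = - Z i j ω)
    (κ : ℝ) (hκ : κ = Real.sqrt (2 * Real.log ((N : ℝ) ^ 2 / ε)))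
    (Mhat : Fin N → Ω → ℝ)
    (hM : ∀ i ω, Mhat i ω =
      ⨆ jl : {jl : Fin N × Fin N // jl.1 ≠ jl.2},
        (|(∫ t, ψ jl.1.1 jl.1.2 t * (f t - F i t) ∂(cubeMeasure d)) +
            ε * Z jl.1.1 jl.1.2 ω| - ε * κ * Lnorm 2 (ψ jl.1.1 jl.1.2)) /
          Lnorm q (ψ jl.1.1 jl.1.2))
    (ihat : Ω → Fin N) (hihatm : Measurable ihat)
    (hmin : ∀ ω i, Mhat (ihat ω) ω ≤ Mhat i ω)
    (istar : Fin N)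
    (histar : ∀ i, Lnorm p (fun t => f t - F istar t) ≤ Lnorm p (fun t => f t - F i t)) :
    ∫ ω, Lnorm p (fun t => F (ihat ω) t - f t) ∂P ≤
      (2 * (⨆ j : {j : Fin N // j ≠ istar},
          Lnorm p (fun t => F istar t - F j.1 t) * Lnorm q (fun t => F istar t - F j.1 t) /
            (Lnorm 2 (fun t => F istar t - F j.1 t)) ^ 2) + 1) *
        (⨅ i, Lnorm p (fun t => F i t - f t))
      + 2 * (⨆ j : {j : Fin N // j ≠ istar},
          Lnorm p (fun t => F istar t - F j.1 t) / Lnorm 2 (fun t => F istar t - F j.1 t)) *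
          ε * Real.sqrt (2 * Real.log ((N : ℝ) ^ 2 / ε))
      + 2 * L * ε := by
  have : p.HolderConjugate q := ENNReal.holderConjugate_iff.2 (by simpa using hpq)
  have h_sub r i j := Lnorm_sub_eq_lpNorm (r := r) (hFm i) (hFm j)
  have h_loss i := Lnorm_sub_eq_lpNorm (r := p) (hFm i) hfm
  have hψ i j (hij : i ≠ j) : ψ i j = probe (F i - F j) p (cubeMeasure d) :=
    funext fun t => by simp [hψdef i j hij t, h_sub, probe]
  have hMhat i ω : Mhat i ω = selectionStat f F p q (cubeMeasure d) ε κ (Z · · ω) i :=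
    by rw [hM, selectionStat_eq_iSup_Lnorm hFm hψ]
  have hL_le := max_le_iff.1 hL.ge
  simp only [Lnorm_sub_comm f, h_loss] at histar
  have h_inf : ⨅ i, lpNorm (F i - f) p (cubeMeasure d) = lpNorm (F istar - f) p (cubeMeasure d) :=
    IsLeast.csInf_eq ⟨Set.mem_range_self istar, Set.forall_mem_range.2 histar⟩
  have h_main := stmt_4_general (P := P) (σ := ε) (L := L) (i₀ := istar)
    ⟨hfm.aestronglyMeasurable, hf.lt_top⟩ (fun i => ⟨(hFm i).aestronglyMeasurable, (hF i).lt_top⟩)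
    (fun i j hij => ⟨((hFm i).sub (hFm j)).aestronglyMeasurable, (hdiff2 i j hij).lt_top⟩)
    (fun i j hij => ⟨((hFm i).sub (hFm j)).aestronglyMeasurable, (hdiffq i j hij).lt_top⟩)
    (fun i j hij => not_ae_eq_of_Lnorm_sub_pos (hFdist i j hij))
    (Lnorm_eq_lpNorm hfm ▸ hL_le.1)
    (fun i => Lnorm_eq_lpNorm (hFm i) ▸ (le_ciSup (Set.finite_range _).bddAbove i).trans hL_le.2)
    hε0.le (hκ ▸ Real.sqrt_nonneg _)
    (fun i j hij => hasSubgaussianMGF_of_map_eq_gaussianReal (hZm i j).aemeasurable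
      (hψ i j hij ▸ hZlaw i j hij))
    hZanti hihatm.aemeasurable (.of_forall fun ω => by simpa only [hMhat] using hmin ω istar)
  have hεN : ε ≤ (N : ℝ) ^ 2 :=
    hε1.le.trans (one_le_pow₀ (by exact_mod_cast one_le_two.trans hN))
  rw [Fintype.card_fin, hκ, mul_exp_neg_sqrt_two_mul_log_div_sq hε0 hεN] at h_main
  simpa only [h_loss, h_sub, h_inf, Q₂, Q₃] using h_main
end

section
/- Let p = ∞ and suppose the probe set is Ψ̄(γ₀) as described in the context, with γ₀ = ε√(ln N) < L. Run the aggregation procedure with δ = ε and κ = √(2 ln(N²/ε)). Then E‖f̂ − f‖_∞ ≤ 3·min_{i∈I_N} ‖f_i − f‖_∞ + 3 Q₄(γ₀)·ε·√(2 ln(N²/ε)) + 2Lε, where Q₄(γ) := max_{i∈I_N, i≠i*} ‖S_{i*i}(·,γ)‖_2/‖S_{i*i}(·,γ)‖_1 and S_{i*i}(·,γ) := (|f_{i*}(·) − f_i(·)| − ‖f_{i*} − f_i‖_∞ + γ)_+ (positive part). -/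
open MeasureTheory
open scoped ENNReal

/-! On the event where every noise term satisfies `|Z(ψ)| ≤ κ‖ψ‖₂`, the statistic `M̂` of any
candidate is at most its `L^∞` error, so the selected candidate has statistic at most the error `r`
of the comparator. The probe built from the difference of the two candidates sees the same noise in
both residuals, so their distance is at most `2(r + εκ‖ψ‖₂) + γ`. Off that event the error is
at most `2L`; a sub-Gaussian union bound controls its probability, and antisymmetry of the noise
makes one-sided tails over ordered pairs enough. -/

open ProbabilityTheory
open scoped NNReal

section LpNorm

variable {α : Type*} [MeasurableSpace α] {μ : Measure α}

theorem lpNorm_top_le_of_ae_bound {g : α → ℝ} {c : ℝ} (hg : AEStronglyMeasurable g μ)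
    (hc : 0 ≤ c) (hgc : ∀ᵐ t ∂μ, ‖g t‖ ≤ c) : lpNorm g ⊤ μ ≤ c := by
  rw [← toReal_eLpNorm hg, eLpNorm_exponent_top]
  exact ENNReal.toReal_le_of_le_ofReal hc (eLpNormEssSup_le_of_ae_bound hgc)

theorem lpNorm_le_lpNorm_of_exponent_le [IsProbabilityMeasure μ] {g : α → ℝ} {p q : ℝ≥0∞}
    (hpq : p ≤ q) (hg : MemLp g q μ) : lpNorm g p μ ≤ lpNorm g q μ := by
  rw [← toReal_eLpNorm hg.1, ← toReal_eLpNorm hg.1]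
  exact ENNReal.toReal_mono hg.2.ne (eLpNorm_le_eLpNorm_of_exponent_le hpq hg.1)

theorem abs_integral_mul_le_lpNorm_top_mul_lpNorm_one {p h : α → ℝ} (hp : Integrable p μ)
    (hh : MemLp h ⊤ μ) : |∫ t, p t * h t ∂μ| ≤ lpNorm h ⊤ μ * lpNorm p 1 μ := by
  rw [lpNorm_one_eq_integral_norm hp.1, ← integral_const_mul]
  rw [← Real.norm_eq_abs]
  refine norm_integral_le_of_norm_le (hp.norm.const_mul _) ?_
  filter_upwards [ae_le_lpNorm_exponent_top hh] with t ht
  rw [norm_mul, mul_comm]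
  gcongr

end LpNorm

section RealSign

theorem real_sign_mul_self (x : ℝ) : Real.sign x * x = |x| := by
  obtain hx | rfl | hx := lt_trichotomy x 0
  · simp [Real.sign_of_neg hx, abs_of_neg hx]
  · simp
  · simp [Real.sign_of_pos hx, abs_of_pos hx]

theorem abs_real_sign_le_one (x : ℝ) : |Real.sign x| ≤ 1 := by
  obtain hx | hx | hx := Real.sign_apply_eq x <;> simp [hx]

theorem measurable_real_sign : Measurable Real.sign :=
  Measurable.ite measurableSet_Iio measurable_const
    (Measurable.ite measurableSet_Ioi measurable_const measurable_const)

end RealSign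

section Probe

variable {α : Type*} [MeasurableSpace α]

/-- The truncation `S(·, γ) = (|g| - ‖g‖_∞ + γ)₊`, supported where `|g|` is within `γ` of its
essential supremum. -/
noncomputable def excess (μ : Measure α) (γ : ℝ) (g : α → ℝ) (t : α) : ℝ :=
  max (|g t| - lpNorm g ⊤ μ + γ) 0

/-- The probe function `ψ_g`, whose integral against `g` recovers `‖g‖_∞` up to `γ`. -/
noncomputable def probe (μ : Measure α) (γ : ℝ) (g : α → ℝ) (t : α) : ℝ :=
  excess μ γ g t * Real.sign (g t) / ∫ u, excess μ γ g u ∂μ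

/-- The ratio `‖S(·, γ)‖₂ / ‖S(·, γ)‖₁` whose maximum over the competitors is `Q₄(γ)`. -/
noncomputable def excessRatio (μ : Measure α) (γ : ℝ) (g : α → ℝ) : ℝ :=
  lpNorm (excess μ γ g) 2 μ / lpNorm (excess μ γ g) 1 μ

variable {μ : Measure α} {γ : ℝ} {g : α → ℝ}

theorem excess_nonneg (t : α) : 0 ≤ excess μ γ g t := le_max_right _ _

theorem sub_mul_excess_le (t : α) :
    (lpNorm g ⊤ μ - γ) * excess μ γ g t ≤ excess μ γ g t * |g t| := by
  obtain h | h := le_total (|g t| - lpNorm g ⊤ μ + γ) 0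
  · simp [excess, max_eq_right h]
  · rw [mul_comm]
    exact mul_le_mul_of_nonneg_left (by linarith) (excess_nonneg t)

theorem excessRatio_nonneg : 0 ≤ excessRatio μ γ g := div_nonneg lpNorm_nonneg lpNorm_nonneg

theorem probe_neg : probe μ γ (-g) = -probe μ γ g := by
  ext t
  simp only [probe, excess, lpNorm_neg, Pi.neg_apply, abs_neg, Real.sign_neg]
  ring

theorem aestronglyMeasurable_excess (hg : AEStronglyMeasurable g μ) :
    AEStronglyMeasurable (excess μ γ g) μ :=
  ((hg.aemeasurable.abs.sub_const _).add_const _).max aemeasurable_const |>.aestronglyMeasurable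

theorem aestronglyMeasurable_probe (hg : AEStronglyMeasurable g μ) :
    AEStronglyMeasurable (probe μ γ g) μ :=
  ((aestronglyMeasurable_excess hg).aemeasurable.mul
    (measurable_real_sign.comp_aemeasurable hg.aemeasurable)).div_const _ |>.aestronglyMeasurable

theorem integral_excess (hg : AEStronglyMeasurable g μ) :
    ∫ t, excess μ γ g t ∂μ = lpNorm (excess μ γ g) 1 μ := by
  rw [lpNorm_one_eq_integral_norm (aestronglyMeasurable_excess hg)]
  simp only [Real.norm_of_nonneg (excess_nonneg _)]

theorem abs_probe_le (hg : AEStronglyMeasurable g μ) (t : α) :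
    |probe μ γ g t| ≤ ((lpNorm (excess μ γ g) 1 μ)⁻¹ • excess μ γ g) t := by
  rw [probe, integral_excess hg, abs_div, abs_mul, abs_of_nonneg (excess_nonneg t),
    abs_of_nonneg lpNorm_nonneg, Pi.smul_apply, smul_eq_mul, inv_mul_eq_div]
  exact div_le_div_of_nonneg_right
    (mul_le_of_le_one_right (excess_nonneg t) (abs_real_sign_le_one _)) lpNorm_nonneg

theorem memLp_excess [IsFiniteMeasure μ] (hγ : 0 ≤ γ) (hg : MemLp g ⊤ μ) (q : ℝ≥0∞) :
    MemLp (excess μ γ g) q μ := by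
  refine MemLp.of_bound (aestronglyMeasurable_excess hg.1) γ ?_
  filter_upwards [ae_le_lpNorm_exponent_top hg] with t ht
  rw [Real.norm_of_nonneg (excess_nonneg t)]
  exact max_le (by linarith [Real.norm_eq_abs (g t)]) hγ

theorem memLp_probe [IsFiniteMeasure μ] (hγ : 0 ≤ γ) (hg : MemLp g ⊤ μ) (q : ℝ≥0∞) :
    MemLp (probe μ γ g) q μ :=
  MemLp.mono' ((memLp_excess hγ hg q).const_smul _) (aestronglyMeasurable_probe hg.1)
    (ae_of_all _ (abs_probe_le hg.1))

theorem lpNorm_probe_le [IsFiniteMeasure μ] (hγ : 0 ≤ γ) (hg : MemLp g ⊤ μ) (q : ℝ≥0∞) :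
    lpNorm (probe μ γ g) q μ ≤ lpNorm (excess μ γ g) q μ / lpNorm (excess μ γ g) 1 μ := by
  have hle := lpNorm_mono_real (f := probe μ γ g)
    ((memLp_excess hγ hg q).const_smul _) (abs_probe_le hg.1)
  rwa [lpNorm_const_smul, coe_nnnorm, norm_inv, Real.norm_of_nonneg lpNorm_nonneg,
    inv_mul_eq_div] at hle

theorem lpNorm_one_probe_le_one [IsFiniteMeasure μ] (hγ : 0 ≤ γ) (hg : MemLp g ⊤ μ) :
    lpNorm (probe μ γ g) 1 μ ≤ 1 :=
  (lpNorm_probe_le hγ hg 1).trans (div_self_le_one _)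

theorem not_ae_excess_mul_eq_zero (hγ : 0 < γ) (hg : MemLp g ⊤ μ) (hg0 : 0 < lpNorm g ⊤ μ) :
    ¬ ∀ᵐ t ∂μ, excess μ γ g t * g t = 0 := by
  intro hzero
  have hbound : ∀ᵐ t ∂μ, ‖g t‖ ≤ max (lpNorm g ⊤ μ - γ) 0 := by
    filter_upwards [hzero] with t ht
    obtain hS | hgt := mul_eq_zero.1 ht
    · exact le_max_of_le_left (by linarith [max_eq_right_iff.1 hS, Real.norm_eq_abs (g t)])
    · simp [hgt]
  have hlt : max (lpNorm g ⊤ μ - γ) 0 < lpNorm g ⊤ μ := max_lt (by linarith) hg0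
  exact hlt.not_ge (lpNorm_top_le_of_ae_bound hg.1 (le_max_right _ _) hbound)

theorem lpNorm_one_excess_pos [IsFiniteMeasure μ] (hγ : 0 < γ) (hg : MemLp g ⊤ μ)
    (hg0 : 0 < lpNorm g ⊤ μ) : 0 < lpNorm (excess μ γ g) 1 μ := by
  refine lpNorm_nonneg.lt_of_ne' fun hzero ↦ not_ae_excess_mul_eq_zero hγ hg hg0 ?_
  filter_upwards [(lpNorm_eq_zero (memLp_excess hγ.le hg 1) one_ne_zero).1 hzero] with t ht
  simp [ht]

theorem lpNorm_probe_pos [IsFiniteMeasure μ] (hγ : 0 < γ) (hg : MemLp g ⊤ μ)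
    (hg0 : 0 < lpNorm g ⊤ μ) {q : ℝ≥0∞} (hq : q ≠ 0) : 0 < lpNorm (probe μ γ g) q μ := by
  refine lpNorm_nonneg.lt_of_ne' fun hzero ↦ not_ae_excess_mul_eq_zero hγ hg hg0 ?_
  filter_upwards [(lpNorm_eq_zero (memLp_probe hγ.le hg q) hq).1 hzero] with t ht
  rw [probe, integral_excess hg.1, Pi.zero_apply, div_eq_zero_iff,
    or_iff_left (lpNorm_one_excess_pos hγ hg hg0).ne'] at ht
  simpa only [mul_eq_zero, Real.sign_eq_zero_iff] using ht

theorem one_le_excessRatio [IsProbabilityMeasure μ] (hγ : 0 < γ) (hg : MemLp g ⊤ μ)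
    (hg0 : 0 < lpNorm g ⊤ μ) : 1 ≤ excessRatio μ γ g :=
  (one_le_div (lpNorm_one_excess_pos hγ hg hg0)).2
    (lpNorm_le_lpNorm_of_exponent_le one_le_two (memLp_excess hγ.le hg 2))

theorem lpNorm_top_sub_le_integral_probe_mul [IsFiniteMeasure μ] (hγ : 0 < γ)
    (hg : MemLp g ⊤ μ) (hg0 : 0 < lpNorm g ⊤ μ) :
    lpNorm g ⊤ μ - γ ≤ ∫ t, probe μ γ g t * g t ∂μ := by
  have hSint : Integrable (excess μ γ g) μ := (memLp_excess hγ.le hg 1).integrable le_rfl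
  have hprobe (t : α) :
      probe μ γ g t * g t = excess μ γ g t * |g t| / lpNorm (excess μ γ g) 1 μ := by
    rw [probe, integral_excess hg.1, ← real_sign_mul_self]
    ring
  simp only [hprobe, integral_div]
  rw [le_div_iff₀ (lpNorm_one_excess_pos hγ hg hg0), ← integral_excess hg.1, ← integral_const_mul]
  exact integral_mono (hSint.const_mul _) (hSint.mul_of_top_left hg.abs) sub_mul_excess_le

end Probe

section ProbeStat

variable {α β : Type*} [MeasurableSpace α]

/-- The statistic `M̂ = max_b (|∫ ψ_b h + ε z_b| - εκ‖ψ_b‖₂) / ‖ψ_b‖₁` of a candidate with residual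
`h`, for the probes `ψ_b` and the noise values `z_b`. -/
noncomputable def probeStat (μ : Measure α) (ψ : β → α → ℝ) (ε κ : ℝ) (z : β → ℝ) (h : α → ℝ) :
    ℝ :=
  ⨆ b, (|(∫ t, ψ b t * h t ∂μ) + ε * z b| - ε * κ * lpNorm (ψ b) 2 μ) / lpNorm (ψ b) 1 μ

variable {μ : Measure α} {ψ : β → α → ℝ} {ε κ r : ℝ} {z : β → ℝ} {h u v : α → ℝ}

theorem abs_integral_add_noise_le {b : β} (hψ : Integrable (ψ b) μ) (hh : MemLp h ⊤ μ) (hε : 0 ≤ ε)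
    (hz : |z b| ≤ κ * lpNorm (ψ b) 2 μ) :
    |(∫ t, ψ b t * h t ∂μ) + ε * z b|
      ≤ lpNorm h ⊤ μ * lpNorm (ψ b) 1 μ + ε * κ * lpNorm (ψ b) 2 μ := by
  refine (abs_add_le _ _).trans
    (add_le_add (abs_integral_mul_le_lpNorm_top_mul_lpNorm_one hψ hh) ?_)
  rw [abs_mul, abs_of_nonneg hε, mul_assoc]
  gcongr

theorem probeStat_le_lpNorm_top (hψ : ∀ b, Integrable (ψ b) μ) (hh : MemLp h ⊤ μ) (hε : 0 ≤ ε)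
    (hz : ∀ b, |z b| ≤ κ * lpNorm (ψ b) 2 μ) : probeStat μ ψ ε κ z h ≤ lpNorm h ⊤ μ :=
  Real.iSup_le (fun b ↦ div_le_of_le_mul₀ lpNorm_nonneg lpNorm_nonneg
    (sub_le_iff_le_add.2 (abs_integral_add_noise_le (hψ b) hh hε (hz b)))) lpNorm_nonneg

theorem abs_integral_add_noise_le_of_probeStat_le [Finite β] (hr : probeStat μ ψ ε κ z h ≤ r)
    {b : β} (hb : 0 < lpNorm (ψ b) 1 μ) :
    |(∫ t, ψ b t * h t ∂μ) + ε * z b| ≤ r * lpNorm (ψ b) 1 μ + ε * κ * lpNorm (ψ b) 2 μ := by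
  rw [← sub_le_iff_le_add, ← div_le_iff₀ hb]
  exact (le_ciSup (Set.finite_range _).bddAbove b).trans hr

-- The noise of the probe `ψ b` is common to both residuals, so it cancels in the difference.
theorem integral_mul_sub_le_of_probeStat_le [Finite β] (hψ : ∀ b, Integrable (ψ b) μ)
    (hu : MemLp u ⊤ μ) (hv : MemLp v ⊤ μ) (hε : 0 ≤ ε)
    (hz : ∀ b, |z b| ≤ κ * lpNorm (ψ b) 2 μ) (huv : probeStat μ ψ ε κ z u ≤ probeStat μ ψ ε κ z v)
    {b : β} (hb : 0 < lpNorm (ψ b) 1 μ) :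
    ∫ t, ψ b t * (u - v) t ∂μ
      ≤ 2 * (lpNorm v ⊤ μ * lpNorm (ψ b) 1 μ + ε * κ * lpNorm (ψ b) 2 μ) := by
  have hu' := abs_integral_add_noise_le_of_probeStat_le
    (huv.trans (probeStat_le_lpNorm_top hψ hv hε hz)) hb
  have hv' := abs_integral_add_noise_le (hψ b) hv hε (hz b)
  have hsplit : ∫ t, ψ b t * (u - v) t ∂μ = (∫ t, ψ b t * u t ∂μ) - ∫ t, ψ b t * v t ∂μ := by
    simp only [Pi.sub_apply, mul_sub]
    exact integral_sub ((hψ b).mul_of_top_left hu) ((hψ b).mul_of_top_left hv)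
  linarith [(abs_le.1 hu').2, (abs_le.1 hv').1]

theorem lpNorm_top_le_of_probeStat_le [Finite β] [IsFiniteMeasure μ] {γ : ℝ}
    (hψ : ∀ b, Integrable (ψ b) μ) (hu : MemLp u ⊤ μ) (hv : MemLp v ⊤ μ) (hε : 0 ≤ ε) (hκ : 0 ≤ κ)
    (hγ : 0 < γ) (hz : ∀ b, |z b| ≤ κ * lpNorm (ψ b) 2 μ)
    (huv : probeStat μ ψ ε κ z u ≤ probeStat μ ψ ε κ z v) (huv0 : 0 < lpNorm (u - v) ⊤ μ)
    {b : β} (hb : ψ b = probe μ γ (u - v)) :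
    lpNorm u ⊤ μ ≤ 3 * lpNorm v ⊤ μ + 2 * (ε * κ * excessRatio μ γ (u - v)) + γ := by
  have hsub : MemLp (u - v) ⊤ μ := hu.sub hv
  have htriangle : lpNorm u ⊤ μ ≤ lpNorm v ⊤ μ + lpNorm (u - v) ⊤ μ :=
    lpNorm_le_lpNorm_add_lpNorm_sub' hv le_top
  have hgood := lpNorm_top_sub_le_integral_probe_mul hγ hsub huv0
  have hdiff := integral_mul_sub_le_of_probeStat_le hψ hu hv hε hz huv
    (hb ▸ lpNorm_probe_pos hγ hsub huv0 one_ne_zero)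
  have hone : lpNorm v ⊤ μ * lpNorm (ψ b) 1 μ ≤ lpNorm v ⊤ μ :=
    mul_le_of_le_one_right lpNorm_nonneg (hb ▸ lpNorm_one_probe_le_one hγ.le hsub)
  have htwo : ε * κ * lpNorm (ψ b) 2 μ ≤ ε * κ * excessRatio μ γ (u - v) :=
    mul_le_mul_of_nonneg_left (hb ▸ lpNorm_probe_le hγ.le hsub 2) (mul_nonneg hε hκ)
  rw [hb] at hdiff hone htwo
  linarith

end ProbeStat

section OffDiag

variable {α ι : Type*} [MeasurableSpace α]

/-- Ordered pairs of distinct indices, the index set of the probes `ψ_{ij}`. -/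
abbrev OffDiag (ι : Type*) : Type _ := {b : ι × ι // b.1 ≠ b.2}

theorem OffDiag.card_le_sq [Fintype ι] [Fintype (OffDiag ι)] :
    Fintype.card (OffDiag ι) ≤ Fintype.card ι ^ 2 :=
  (Fintype.card_subtype_le _).trans_eq (by rw [Fintype.card_prod, sq])

/-- The involution `(i, j) ↦ (j, i)`. -/
def OffDiag.swap (b : OffDiag ι) : OffDiag ι := ⟨b.1.swap, b.2.symm⟩

/-- The probe set `Ψ̄(γ)` of a family `F`, indexed by `ψ_{ij}` with `i ≠ j`. -/
noncomputable def pairProbe (μ : Measure α) (γ : ℝ) (F : ι → α → ℝ) (b : OffDiag ι) : α → ℝ :=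
  probe μ γ (F b.1.1 - F b.1.2)

variable {μ : Measure α} {γ ε κ : ℝ} {F : ι → α → ℝ}

theorem pairProbe_swap (b : OffDiag ι) : pairProbe μ γ F b.swap = -pairProbe μ γ F b := by
  rw [pairProbe, pairProbe, ← probe_neg, neg_sub]
  rfl

theorem memLp_pairProbe [IsFiniteMeasure μ] (hγ : 0 ≤ γ) (hF : ∀ i, MemLp (F i) ⊤ μ)
    (b : OffDiag ι) (q : ℝ≥0∞) : MemLp (pairProbe μ γ F b) q μ :=
  memLp_probe hγ ((hF _).sub (hF _)) q

theorem lpNorm_top_sub_le_of_probeStat_pairProbe_le [Finite ι] [IsProbabilityMeasure μ]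
    {f : α → ℝ} {z : OffDiag ι → ℝ} {k i₀ : ι} (hf : MemLp f ⊤ μ) (hF : ∀ i, MemLp (F i) ⊤ μ)
    (hFdist : ∀ i j, i ≠ j → 0 < lpNorm (F i - F j) ⊤ μ) (hγ : 0 < γ) (hε : 0 ≤ ε) (hκ : 0 ≤ κ)
    (hγκ : γ ≤ ε * κ) (hz : ∀ b, |z b| ≤ κ * lpNorm (pairProbe μ γ F b) 2 μ)
    (hk : probeStat μ (pairProbe μ γ F) ε κ z (f - F k)
      ≤ probeStat μ (pairProbe μ γ F) ε κ z (f - F i₀)) :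
    lpNorm (F k - f) ⊤ μ ≤ 3 * lpNorm (F i₀ - f) ⊤ μ
      + 3 * (⨆ j : {j // j ≠ i₀}, excessRatio μ γ (F i₀ - F j)) * ε * κ := by
  set Q := ⨆ j : {j // j ≠ i₀}, excessRatio μ γ (F i₀ - F j) with hQ
  obtain rfl | hne := eq_or_ne k i₀
  · have hQ0 : 0 ≤ Q := Real.iSup_nonneg fun _ ↦ excessRatio_nonneg
    have : 0 ≤ 3 * Q * ε * κ := by positivity
    linarith [lpNorm_nonneg (f := F k - f) (p := ⊤) (μ := μ)]
  · have hsub : (f - F k) - (f - F i₀) = F i₀ - F k := by abel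
    have hdist := hFdist i₀ k hne.symm
    have hratio : excessRatio μ γ (F i₀ - F k) ≤ Q :=
      le_ciSup (f := fun j : {j // j ≠ i₀} ↦ excessRatio μ γ (F i₀ - F j))
        (Set.finite_range _).bddAbove ⟨k, hne⟩
    have herror := lpNorm_top_le_of_probeStat_le
      (fun b ↦ (memLp_pairProbe hγ.le hF b 1).integrable le_rfl) (hf.sub (hF k)) (hf.sub (hF i₀))
      hε hκ hγ hz hk (hsub ▸ hdist) (b := ⟨(i₀, k), hne.symm⟩) (hsub ▸ rfl)
    rw [hsub, lpNorm_sub_comm f, lpNorm_sub_comm f] at herror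
    have hεκ : 0 ≤ ε * κ := mul_nonneg hε hκ
    have hratio_one := one_le_excessRatio hγ ((hF i₀).sub (hF k)) hdist
    have hεκQ := mul_le_mul_of_nonneg_left hratio hεκ
    have hγQ : γ ≤ ε * κ * Q :=
      hγκ.trans (le_mul_of_one_le_right hεκ (hratio_one.trans hratio))
    linarith

end OffDiag

section Noise

variable {Ω : Type*} [MeasurableSpace Ω] {P : Measure Ω}

theorem hasSubgaussianMGF_of_map_eq_gaussianReal {X : Ω → ℝ} {v : ℝ≥0} (hX : AEMeasurable X P)
    (hlaw : P.map X = gaussianReal 0 v) : HasSubgaussianMGF X v P where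
  integrable_exp_mul s :=
    (hlaw ▸ integrable_exp_mul_gaussianReal s :
      Integrable (fun x ↦ Real.exp (s * x)) (P.map X)).comp_aemeasurable hX
  mgf_le s := by simp [mgf_gaussianReal hlaw]

theorem measureReal_mul_le_le_exp_of_hasSubgaussianMGF {X : Ω → ℝ} {σ : ℝ≥0} (hσ : 0 < σ)
    (hX : HasSubgaussianMGF X (σ ^ 2) P) {κ : ℝ} (hκ : 0 ≤ κ) :
    P.real {ω | κ * σ ≤ X ω} ≤ Real.exp (-(κ ^ 2 / 2)) := by
  have hσ' : (σ : ℝ) ≠ 0 := by positivity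
  refine (hX.measure_ge_le (by positivity)).trans_eq ?_
  congr 1
  push_cast
  field_simp

theorem measureReal_exists_mul_lt_abs_le [IsFiniteMeasure P] {β : Type*} [Fintype β]
    {X : β → Ω → ℝ} {σ : β → ℝ≥0} (s : β → β) (hσ : ∀ b, 0 < σ b)
    (hX : ∀ b, HasSubgaussianMGF (X b) (σ b ^ 2) P) (hσs : ∀ b, σ (s b) = σ b)
    (hXs : ∀ b, ∀ᵐ ω ∂P, X (s b) ω = -X b ω) {κ : ℝ} (hκ : 0 ≤ κ) :
    P.real {ω | ∃ b, κ * σ b < |X b ω|} ≤ Fintype.card β * Real.exp (-(κ ^ 2 / 2)) := by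
  have hsub : {ω | ∃ b, κ * σ b < |X b ω|} ≤ᵐ[P] ⋃ b, {ω | κ * σ b ≤ X b ω} := by
    filter_upwards [ae_all_iff.2 hXs] with ω hω ⟨b, hb⟩
    refine Set.mem_iUnion.2 ?_
    obtain hb | hb := lt_abs.1 hb
    · exact ⟨b, hb.le⟩
    · exact ⟨s b, by simpa only [Set.mem_ofPred_eq, hσs, hω] using hb.le⟩
  calc P.real {ω | ∃ b, κ * σ b < |X b ω|}
      ≤ P.real (⋃ b, {ω | κ * σ b ≤ X b ω}) :=
        ENNReal.toReal_mono (measure_ne_top _ _) (measure_mono_ae hsub)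
    _ ≤ ∑ b, P.real {ω | κ * σ b ≤ X b ω} := measureReal_iUnion_fintype_le _
    _ ≤ ∑ _b : β, Real.exp (-(κ ^ 2 / 2)) := Finset.sum_le_sum fun b _ ↦
        measureReal_mul_le_le_exp_of_hasSubgaussianMGF (hσ b) (hX b) hκ
    _ = Fintype.card β * Real.exp (-(κ ^ 2 / 2)) := by simp

theorem exp_neg_sqrt_two_mul_log_sq_div_two_le {x : ℝ} (hx : 0 < x) :
    Real.exp (-(√(2 * Real.log x) ^ 2 / 2)) ≤ x⁻¹ := by
  rw [← Real.exp_log (inv_pos.2 hx), Real.log_inv, Real.exp_le_exp, Real.sq_sqrt']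
  linarith [le_max_left (2 * Real.log x) 0]

theorem integral_le_add_mul_measureReal_s5 [IsProbabilityMeasure P] {X : Ω → ℝ} {A : Set Ω} {B C : ℝ}
    (hX : Integrable X P) (hB : 0 ≤ B) (hXC : ∀ ω, X ω ≤ C)
    (hXB : ∀ ω ∉ A, X ω ≤ B) : ∫ ω, X ω ∂P ≤ B + C * P.real A := by
  have hA : MeasurableSet (toMeasurable P A) := measurableSet_toMeasurable P A
  have hind : Integrable ((toMeasurable P A).indicator fun _ ↦ C) P :=
    (integrable_const C).indicator hA
  calc ∫ ω, X ω ∂P ≤ ∫ ω, (B + (toMeasurable P A).indicator (fun _ ↦ C) ω) ∂P := by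
        refine integral_mono hX ((integrable_const B).add hind) fun ω ↦ ?_
        by_cases hω : ω ∈ toMeasurable P A
        · rw [Set.indicator_of_mem hω]
          linarith [hXC ω]
        · rw [Set.indicator_of_notMem hω, add_zero]
          exact hXB ω fun h ↦ hω (subset_toMeasurable P A h)
    _ = B + C * P.real A := by
        rw [integral_add (integrable_const B) hind, integral_indicator_const C hA]
        simp [measureReal_def, mul_comm]

end Noise

theorem measureReal_exists_pairProbe_noise_gt_le {α ι Ω : Type*} [MeasurableSpace α] [Fintype ι]
    [MeasurableSpace Ω] {μ : Measure α} [IsFiniteMeasure μ] {P : Measure Ω} [IsFiniteMeasure P]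
    {F : ι → α → ℝ} (hF : ∀ i, MemLp (F i) ⊤ μ)
    (hFdist : ∀ i j, i ≠ j → 0 < lpNorm (F i - F j) ⊤ μ) {γ δ κ : ℝ} (hγ : 0 < γ) (hδ : 0 < δ)
    (hκ : κ = √(2 * Real.log ((Fintype.card ι : ℝ) ^ 2 / δ))) {Z : OffDiag ι → Ω → ℝ}
    (hZ : ∀ b, HasSubgaussianMGF (Z b) ((eLpNorm (pairProbe μ γ F b) 2 μ).toNNReal ^ 2) P)
    (hZanti : ∀ b : OffDiag ι, ∀ᵐ ω ∂P, Z b.swap ω = -Z b ω) :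
    P.real {ω | ∃ b, κ * lpNorm (pairProbe μ γ F b) 2 μ < |Z b ω|} ≤ δ := by
  classical
  obtain _ | _ := isEmpty_or_nonempty ι
  · simpa using hδ.le
  have hσ (b : OffDiag ι) :
      lpNorm (pairProbe μ γ F b) 2 μ = (eLpNorm (pairProbe μ γ F b) 2 μ).toNNReal :=
    (toReal_eLpNorm (memLp_pairProbe hγ.le hF b 2).1).symm
  have hσ_pos (b : OffDiag ι) : 0 < (eLpNorm (pairProbe μ γ F b) 2 μ).toNNReal := by
    rw [← NNReal.coe_pos, ← hσ]
    exact lpNorm_probe_pos hγ ((hF _).sub (hF _)) (hFdist _ _ b.2) two_ne_zero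
  simp only [hσ]
  calc _ ≤ Fintype.card (OffDiag ι) * Real.exp (-(κ ^ 2 / 2)) :=
        measureReal_exists_mul_lt_abs_le OffDiag.swap hσ_pos hZ
          (fun b ↦ by rw [pairProbe_swap, eLpNorm_neg]) hZanti (hκ ▸ Real.sqrt_nonneg _)
    _ ≤ (Fintype.card ι : ℝ) ^ 2 * ((Fintype.card ι : ℝ) ^ 2 / δ)⁻¹ := by
        gcongr
        · exact_mod_cast OffDiag.card_le_sq
        · exact hκ ▸ exp_neg_sqrt_two_mul_log_sq_div_two_le (by positivity)
    _ = δ := by field_simp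

theorem stmt_5_general {α ι Ω : Type*} [MeasurableSpace α] [Fintype ι] [MeasurableSpace ι]
    [MeasurableSingletonClass ι] [MeasurableSpace Ω] {μ : Measure α} [IsProbabilityMeasure μ]
    {P : Measure Ω} [IsProbabilityMeasure P] {f : α → ℝ} {F : ι → α → ℝ} (hf : MemLp f ⊤ μ)
    (hF : ∀ i, MemLp (F i) ⊤ μ) (hFdist : ∀ i j, i ≠ j → 0 < lpNorm (F i - F j) ⊤ μ)
    {L : ℝ} (hfL : lpNorm f ⊤ μ ≤ L) (hFL : ∀ i, lpNorm (F i) ⊤ μ ≤ L)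
    {ε γ δ κ : ℝ} (hε : 0 ≤ ε) (hγ : 0 < γ) (hδ : 0 < δ)
    (hκ : κ = √(2 * Real.log ((Fintype.card ι : ℝ) ^ 2 / δ))) (hγκ : γ ≤ ε * κ)
    {Z : OffDiag ι → Ω → ℝ}
    (hZ : ∀ b, HasSubgaussianMGF (Z b) ((eLpNorm (pairProbe μ γ F b) 2 μ).toNNReal ^ 2) P)
    (hZanti : ∀ b : OffDiag ι, ∀ᵐ ω ∂P, Z b.swap ω = -Z b ω)
    {ihat : Ω → ι} (hihat : Measurable ihat)
    (hmin : ∀ ω i, probeStat μ (pairProbe μ γ F) ε κ (Z · ω) (f - F (ihat ω))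
      ≤ probeStat μ (pairProbe μ γ F) ε κ (Z · ω) (f - F i)) (i₀ : ι) :
    ∫ ω, lpNorm (F (ihat ω) - f) ⊤ μ ∂P ≤ 3 * lpNorm (F i₀ - f) ⊤ μ
      + 3 * (⨆ j : {j // j ≠ i₀}, excessRatio μ γ (F i₀ - F j)) * ε * κ + 2 * L * δ := by
  have hκ0 : 0 ≤ κ := hκ ▸ Real.sqrt_nonneg _
  have hL : 0 ≤ L := lpNorm_nonneg.trans hfL
  have hQ : 0 ≤ ⨆ j : {j // j ≠ i₀}, excessRatio μ γ (F i₀ - F j) :=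
    Real.iSup_nonneg fun _ ↦ excessRatio_nonneg
  have hr : 0 ≤ lpNorm (F i₀ - f) ⊤ μ := lpNorm_nonneg
  have herror_int : Integrable (fun ω ↦ lpNorm (F (ihat ω) - f) ⊤ μ) P :=
    (Integrable.of_finite (f := fun i ↦ lpNorm (F i - f) ⊤ μ)).comp_measurable hihat
  have herror_le (ω : Ω) : lpNorm (F (ihat ω) - f) ⊤ μ ≤ 2 * L :=
    (lpNorm_sub_le (hF _) le_top).trans (by linarith [hFL (ihat ω)])
  refine (integral_le_add_mul_measureReal_s5 herror_int (by positivity) herror_le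
    fun ω hω ↦ ?_).trans (add_le_add_right (mul_le_mul_of_nonneg_left
      (measureReal_exists_pairProbe_noise_gt_le hF hFdist hγ hδ hκ hZ hZanti) (by positivity)) _)
  exact lpNorm_top_sub_le_of_probeStat_pairProbe_le hf hF hFdist hγ hε hκ0 hγκ
    (by simpa only [Set.mem_ofPred_eq, not_exists, not_lt] using hω) (hmin ω i₀)

section Cube

variable {d : ℕ}

instance isProbabilityMeasure_cubeMeasure : IsProbabilityMeasure (cubeMeasure d) :=
  ⟨by simp [cubeMeasure, Real.volume_Icc_pi]⟩

theorem Lnorm_eq_lpNorm {r : ℝ≥0∞} {g : (Fin d → ℝ) → ℝ}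
    (hg : AEStronglyMeasurable g (cubeMeasure d)) : Lnorm r g = lpNorm g r (cubeMeasure d) :=
  toReal_eLpNorm hg

theorem Lnorm_sub_le_ciInf {ι : Type*} {r : ℝ≥0∞} {f : (Fin d → ℝ) → ℝ}
    {F : ι → (Fin d → ℝ) → ℝ} {i₀ : ι} (h : ∀ i, Lnorm r (f - F i₀) ≤ Lnorm r (f - F i)) :
    Lnorm r (F i₀ - f) ≤ ⨅ i, Lnorm r (F i - f) := by
  have : Nonempty ι := ⟨i₀⟩
  simp only [Lnorm, eLpNorm_sub_comm _ f]
  exact le_ciInf h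

theorem excess_cubeMeasure (γ : ℝ) {g : (Fin d → ℝ) → ℝ}
    (hg : AEStronglyMeasurable g (cubeMeasure d)) :
    excess (cubeMeasure d) γ g = fun t ↦ max (|g t| - Lnorm ⊤ g + γ) 0 := by
  rw [Lnorm_eq_lpNorm hg]
  rfl

theorem excessRatio_cubeMeasure (γ : ℝ) {g : (Fin d → ℝ) → ℝ}
    (hg : AEStronglyMeasurable g (cubeMeasure d)) :
    excessRatio (cubeMeasure d) γ g = Lnorm 2 (fun t ↦ max (|g t| - Lnorm ⊤ g + γ) 0) /
      Lnorm 1 (fun t ↦ max (|g t| - Lnorm ⊤ g + γ) 0) := by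
  rw [excessRatio, ← excess_cubeMeasure γ hg, Lnorm_eq_lpNorm (aestronglyMeasurable_excess hg),
    Lnorm_eq_lpNorm (aestronglyMeasurable_excess hg)]

theorem probe_cubeMeasure (γ : ℝ) {g : (Fin d → ℝ) → ℝ}
    (hg : AEStronglyMeasurable g (cubeMeasure d)) (t : Fin d → ℝ) :
    probe (cubeMeasure d) γ g t = max (|g t| - Lnorm ⊤ g + γ) 0 * Real.sign (g t) /
      ∫ u, max (|g u| - Lnorm ⊤ g + γ) 0 ∂(cubeMeasure d) := by
  rw [probe, excess_cubeMeasure γ hg]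

end Cube

theorem sqrt_log_le_sqrt_two_mul_log_sq_div {x δ : ℝ} (hx : 1 ≤ x) (hδ0 : 0 < δ) (hδ1 : δ ≤ 1) :
    √(Real.log x) ≤ √(2 * Real.log (x ^ 2 / δ)) := by
  have hle : Real.log x ≤ Real.log (x ^ 2 / δ) :=
    Real.log_le_log (by positivity) ((le_div_iff₀ hδ0).2 (by nlinarith))
  gcongr
  linarith [Real.log_nonneg hx]

/-- Corollary 3 of the paper: `L^∞` oracle inequality for the
aggregation procedure with the `(γ₀,∞)`-good probe set `Ψ̄(γ₀)`,
`γ₀ = ε√(ln N) < L`, `δ = ε` and `κ = √(2 ln(N²/ε))`. -/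
theorem stmt_5
    {d N : ℕ} (hd : 1 ≤ d) (hN : 2 ≤ N)
    (f : (Fin d → ℝ) → ℝ) (F : Fin N → (Fin d → ℝ) → ℝ)
    (hfm : Measurable f) (hFm : ∀ i, Measurable (F i))
    (hf : eLpNorm f ⊤ (cubeMeasure d) ≠ ⊤)
    (hF : ∀ i, eLpNorm (F i) ⊤ (cubeMeasure d) ≠ ⊤)
    (hFdist : ∀ i j, i ≠ j → 0 < Lnorm ⊤ (fun t => F i t - F j t))
    (L : ℝ) (hL : L = max (Lnorm ⊤ f) (⨆ i, Lnorm ⊤ (F i)))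
    (ε : ℝ) (hε0 : 0 < ε) (hε1 : ε < 1)
    (γ0 : ℝ) (hγ0 : γ0 = ε * Real.sqrt (Real.log N)) (hγ0L : γ0 < L)
    -- the probe functions of `Ψ̄(γ₀)`
    (ψ : Fin N → Fin N → (Fin d → ℝ) → ℝ)
    (hψdef : ∀ i j, i ≠ j → ∀ t, ψ i j t =
      max (|F i t - F j t| - Lnorm ⊤ (fun u => F i u - F j u) + γ0) 0 *
        Real.sign (F i t - F j t) /
        ∫ u, max (|F i u - F j u| - Lnorm ⊤ (fun v => F i v - F j v) + γ0) 0
          ∂(cubeMeasure d))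
    {Ω : Type} [MeasurableSpace Ω] (P : Measure Ω) [IsProbabilityMeasure P]
    (Z : Fin N → Fin N → Ω → ℝ) (hZm : ∀ i j, Measurable (Z i j))
    (hZlaw : ∀ i j, i ≠ j → Measure.map (Z i j) P =
      ProbabilityTheory.gaussianReal 0 ((eLpNorm (ψ i j) 2 (cubeMeasure d)).toNNReal ^ 2))
    (hZanti : ∀ i j, i ≠ j → ∀ᵐ ω ∂P, Z j i ω = - Z i j ω)
    (κ : ℝ) (hκ : κ = Real.sqrt (2 * Real.log ((N : ℝ) ^ 2 / ε)))
    (Mhat : Fin N → Ω → ℝ)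
    (hM : ∀ i ω, Mhat i ω =
      ⨆ jl : {jl : Fin N × Fin N // jl.1 ≠ jl.2},
        (|(∫ t, ψ jl.1.1 jl.1.2 t * (f t - F i t) ∂(cubeMeasure d)) +
            ε * Z jl.1.1 jl.1.2 ω| - ε * κ * Lnorm 2 (ψ jl.1.1 jl.1.2)) /
          Lnorm 1 (ψ jl.1.1 jl.1.2))
    (ihat : Ω → Fin N) (hihatm : Measurable ihat)
    (hmin : ∀ ω i, Mhat (ihat ω) ω ≤ Mhat i ω)
    (istar : Fin N)
    (histar : ∀ i, Lnorm ⊤ (fun t => f t - F istar t) ≤ Lnorm ⊤ (fun t => f t - F i t)) :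
    ∫ ω, Lnorm ⊤ (fun t => F (ihat ω) t - f t) ∂P ≤
      3 * (⨅ i, Lnorm ⊤ (fun t => F i t - f t))
        + 3 * (⨆ j : {j : Fin N // j ≠ istar},
            Lnorm 2 (fun t =>
              max (|F istar t - F j.1 t| - Lnorm ⊤ (fun u => F istar u - F j.1 u) + γ0) 0) /
            Lnorm 1 (fun t =>
              max (|F istar t - F j.1 t| - Lnorm ⊤ (fun u => F istar u - F j.1 u) + γ0) 0)) *
            ε * Real.sqrt (2 * Real.log ((N : ℝ) ^ 2 / ε))
        + 2 * L * ε := by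
  have hf' : MemLp f ⊤ (cubeMeasure d) := ⟨hfm.aestronglyMeasurable, hf.lt_top⟩
  have hF' (i) : MemLp (F i) ⊤ (cubeMeasure d) := ⟨(hFm i).aestronglyMeasurable, (hF i).lt_top⟩
  have hsub (i j) : AEStronglyMeasurable (F i - F j) (cubeMeasure d) := ((hF' i).sub (hF' j)).1
  have hfL : Lnorm ⊤ f ≤ L := hL ▸ le_max_left _ _
  have hFL (i) : Lnorm ⊤ (F i) ≤ L := (le_max_of_le_right
    (le_ciSup (Set.finite_range fun i ↦ Lnorm ⊤ (F i)).bddAbove i)).trans_eq hL.symm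
  have hγ0_pos : 0 < γ0 := hγ0 ▸ mul_pos hε0 (Real.sqrt_pos.2 (Real.log_pos (mod_cast hN)))
  have hγ0_le : γ0 ≤ ε * κ := hγ0 ▸ hκ ▸ mul_le_mul_of_nonneg_left
    (sqrt_log_le_sqrt_two_mul_log_sq_div (mod_cast by lia) hε0 hε1.le) hε0.le
  have hψ (b : OffDiag (Fin N)) : ψ b.1.1 b.1.2 = pairProbe (cubeMeasure d) γ0 F b :=
    funext fun t ↦ (hψdef _ _ b.2 t).trans (probe_cubeMeasure γ0 (hsub _ _) t).symm
  have hMhat (i ω) : Mhat i ω = probeStat (cubeMeasure d) (pairProbe (cubeMeasure d) γ0 F) ε κ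
      (fun b ↦ Z b.1.1 b.1.2 ω) (f - F i) := by
    simp only [hM, hψ, Lnorm_eq_lpNorm (memLp_pairProbe hγ0_pos.le hF' _ 1).1]
    rfl
  have horacle := stmt_5_general (Z := fun b ↦ Z b.1.1 b.1.2) hf' hF'
    (fun i j hij ↦ Lnorm_eq_lpNorm (hsub i j) ▸ hFdist i j hij) (Lnorm_eq_lpNorm hf'.1 ▸ hfL)
    (fun i ↦ Lnorm_eq_lpNorm (hF' i).1 ▸ hFL i) hε0.le hγ0_pos hε0
    (by rwa [Fintype.card_fin]) hγ0_le
    (fun b ↦ hasSubgaussianMGF_of_map_eq_gaussianReal (hZm _ _).aemeasurable (hψ b ▸ hZlaw _ _ b.2))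
    (fun b ↦ hZanti _ _ b.2) hihatm (fun ω i ↦ by simpa only [hMhat] using hmin ω i) istar
  simp only [excessRatio_cubeMeasure γ0 (hsub _ _),
    ← Lnorm_eq_lpNorm ((hF' _).sub hf').1, hκ] at horacle
  exact horacle.trans (add_le_add_left (add_le_add_left
    (mul_le_mul_of_nonneg_left (Lnorm_sub_le_ciInf histar) zero_le_three) _) _)
end

section
/- In the worst-case family setting described in the context, for every measurable selection rule ĩ : ℝ^N → I_N one has max_{i∈I_N} ∫_{ℝ^N} ‖f̄_{ĩ(y)} − f̄_i‖_p dP_i(y) ≥ (1/(12√3))·K_p·ε·√(ln(N−1)), where K_p := (2h*)^{1/p − 1/2} (with 1/p := 0 when p = ∞). -/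
open MeasureTheory
open scoped ENNReal

/-!
The `P_i` are compared with the centred Gaussian `Q`. Some index `i` is selected with
`Q`-probability at most `1 / N`. Since `dP_i/dQ` is increasing in the coordinate `y_i`, it exceeds
its value `exp (L² h* / (2 ε²))` at the mean `y_i = L h*` with `P_i`-probability at most `1 / 2`.
Hence `P_i` selects `i` with probability at most `1 / 2 + exp (L² h* / (2 ε²)) / N`, which is at
most `11 / 12` by the choice of `h*`. Every wrong selection costs exactly `L (2 h*)^(1 / p)`, and
`ln (N - 1) ≤ 6 L² h* / ε²` rewrites a twelfth of that cost as the stated bound.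
-/

open Function ProbabilityTheory Real

section FiniteSelection

variable {Ω ι : Type*} [MeasurableSpace Ω] {Q : Measure Ω}

lemma withDensity_real_le_add_mul [IsFiniteMeasure Q] {g : Ω → ℝ} (hg : Measurable g)
    [IsFiniteMeasure (Q.withDensity fun x ↦ ENNReal.ofReal (g x))] {c : ℝ} (hc : 0 ≤ c)
    {s : Set Ω} (hs : MeasurableSet s) :
    (Q.withDensity fun x ↦ ENNReal.ofReal (g x)).real s ≤
      (Q.withDensity fun x ↦ ENNReal.ofReal (g x)).real {x | c < g x} + c * Q.real s := by
  set P := Q.withDensity fun x ↦ ENNReal.ofReal (g x)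
  have hle : MeasurableSet {x | g x ≤ c} := measurableSet_le hg measurable_const
  have hcover : s ⊆ {x | c < g x} ∪ s ∩ {x | g x ≤ c} := fun x hx ↦
    (lt_or_ge c (g x)).imp id fun hgx ↦ ⟨hx, hgx⟩
  have hsmall : P (s ∩ {x | g x ≤ c}) ≤ ENNReal.ofReal c * Q s := calc
    P (s ∩ {x | g x ≤ c}) = ∫⁻ x in s ∩ {x | g x ≤ c}, ENNReal.ofReal (g x) ∂Q :=
      withDensity_apply _ (hs.inter hle)
    _ ≤ ∫⁻ _ in s ∩ {x | g x ≤ c}, ENNReal.ofReal c ∂Q :=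
      setLIntegral_mono' (hs.inter hle) fun x hx ↦ ENNReal.ofReal_le_ofReal hx.2
    _ = ENNReal.ofReal c * Q (s ∩ {x | g x ≤ c}) := setLIntegral_const _ _
    _ ≤ ENNReal.ofReal c * Q s := by gcongr; exact Set.inter_subset_left
  have hsmall_real : P.real (s ∩ {x | g x ≤ c}) ≤ c * Q.real s := by
    simpa [measureReal_def, hc] using ENNReal.toReal_mono (by finiteness) hsmall
  calc P.real s ≤ P.real ({x | c < g x} ∪ s ∩ {x | g x ≤ c}) := measureReal_mono hcover
    _ ≤ P.real {x | c < g x} + P.real (s ∩ {x | g x ≤ c}) := measureReal_union_le _ _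
    _ ≤ P.real {x | c < g x} + c * Q.real s := by gcongr

variable [Fintype ι] [Nonempty ι] [MeasurableSpace ι] [MeasurableSingletonClass ι]
  {f : Ω → ι}

lemma exists_measureReal_preimage_singleton_le [IsProbabilityMeasure Q] (hf : Measurable f) :
    ∃ i, Q.real (f ⁻¹' {i}) ≤ 1 / Fintype.card ι := by
  have hsum : ∑ i, Q.real (f ⁻¹' {i}) = 1 := by
    simp [sum_measureReal_preimage_singleton (μ := Q) Finset.univ
      fun i _ ↦ hf (measurableSet_singleton i)]
  obtain ⟨i, -, hi⟩ := Finset.exists_le_of_sum_le Finset.univ_nonempty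
    (f := fun i ↦ Q.real (f ⁻¹' {i})) (g := fun _ ↦ 1 / (Fintype.card ι : ℝ)) (by simp [hsum])
  exact ⟨i, hi⟩

variable [IsProbabilityMeasure Q] {P : ι → Measure Ω} [∀ i, IsProbabilityMeasure (P i)]
  {g : ι → Ω → ℝ} {c δ : ℝ}

lemma exists_le_measureReal_ne (hg : ∀ i, Measurable (g i))
    (hP : ∀ i, P i = Q.withDensity fun x ↦ ENNReal.ofReal (g i x)) (hc : 0 ≤ c)
    (hδ : ∀ i, (P i).real {x | c < g i x} ≤ δ) (hf : Measurable f) :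
    ∃ i, 1 - δ - c / Fintype.card ι ≤ (P i).real {x | f x ≠ i} := by
  obtain ⟨i, hi⟩ := exists_measureReal_preimage_singleton_le (Q := Q) hf
  refine ⟨i, ?_⟩
  have hfi : MeasurableSet (f ⁻¹' {i}) := hf (measurableSet_singleton i)
  have : IsProbabilityMeasure (Q.withDensity fun x ↦ ENNReal.ofReal (g i x)) := by
    rw [← hP]; infer_instance
  have hcorrect : (P i).real (f ⁻¹' {i}) ≤ δ + c / Fintype.card ι := calc
    (P i).real (f ⁻¹' {i}) ≤ (P i).real {x | c < g i x} + c * Q.real (f ⁻¹' {i}) := by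
      simpa only [hP] using withDensity_real_le_add_mul (hg i) hc hfi
    _ ≤ δ + c * (1 / Fintype.card ι) := by gcongr; exact hδ i
    _ = δ + c / Fintype.card ι := by rw [mul_one_div]
  have hcompl : (P i).real {x | f x ≠ i} = 1 - (P i).real (f ⁻¹' {i}) :=
    probReal_compl_eq_one_sub hfi
  linarith

theorem mul_le_iSup_integral_loss (hg : ∀ i, Measurable (g i))
    (hP : ∀ i, P i = Q.withDensity fun x ↦ ENNReal.ofReal (g i x)) (hc : 0 ≤ c)
    (hδ : ∀ i, (P i).real {x | c < g i x} ≤ δ) (hf : Measurable f) {D : ℝ} (hD : 0 ≤ D)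
    {ℓ : ι → ι → ℝ} (hℓ : ∀ i j, 0 ≤ ℓ i j) (hDℓ : ∀ i j, i ≠ j → D ≤ ℓ i j) :
    D * (1 - δ - c / Fintype.card ι) ≤ ⨆ i, ∫ x, ℓ (f x) i ∂P i := by
  obtain ⟨i, hi⟩ := exists_le_measureReal_ne hg hP hc hδ hf
  have hint : Integrable (fun x ↦ ℓ (f x) i) (P i) :=
    (Integrable.of_finite (f := fun j ↦ ℓ j i)).comp_measurable hf
  calc D * (1 - δ - c / Fintype.card ι) ≤ D * (P i).real {x | f x ≠ i} := by gcongr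
    _ ≤ D * (P i).real {x | D ≤ ℓ (f x) i} :=
      mul_le_mul_of_nonneg_left (measureReal_mono fun x hx ↦ hDℓ (f x) i hx) hD
    _ ≤ ∫ x, ℓ (f x) i ∂P i :=
      mul_meas_ge_le_integral_of_nonneg (.of_forall fun x ↦ hℓ (f x) i) hint D
    _ ≤ ⨆ i, ∫ x, ℓ (f x) i ∂P i :=
      le_ciSup (f := fun i ↦ ∫ x, ℓ (f x) i ∂P i) (Set.finite_range _).bddAbove i

end FiniteSelection

section Gaussian

lemma gaussianReal_real_Ioi_mean_le (m : ℝ) (v : NNReal) :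
    (gaussianReal m v).real (Set.Ioi m) ≤ 1 / 2 := by
  have hreflect : (gaussianReal m v).map (fun x ↦ 2 * m - x) = gaussianReal m v := by
    rw [gaussianReal_map_const_sub, two_mul, add_sub_cancel_right]
  have hpreimage : (fun x ↦ 2 * m - x) ⁻¹' Set.Ioi m = Set.Iio m := by
    rw [Set.preimage_const_sub_Ioi, two_mul, add_sub_cancel_right]
  have hsymm : (gaussianReal m v).real (Set.Ioi m) = (gaussianReal m v).real (Set.Iio m) := by
    conv_lhs => rw [← hreflect]
    rw [map_measureReal_apply (by fun_prop) measurableSet_Ioi, hpreimage]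
  have hdisj : Disjoint (Set.Ioi m) (Set.Iio m) :=
    Set.disjoint_left.2 fun x (hgt : m < x) hlt ↦ lt_asymm hgt hlt
  have hunion := measureReal_union (μ := gaussianReal m v) hdisj measurableSet_Iio
  have hone : (gaussianReal m v).real (Set.Ioi m ∪ Set.Iio m) ≤ 1 := measureReal_le_one
  linarith

lemma gaussianReal_eq_withDensity_gaussianReal (m₀ m₁ : ℝ) {v : NNReal} (hv : v ≠ 0) :
    gaussianReal m₁ v = (gaussianReal m₀ v).withDensity
      fun x ↦ ENNReal.ofReal (exp ((m₁ - m₀) * (x - (m₀ + m₁) / 2) / v)) := by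
  have hpdf : gaussianPDF m₁ v = gaussianPDF m₀ v *
      fun x ↦ ENNReal.ofReal (exp ((m₁ - m₀) * (x - (m₀ + m₁) / 2) / v)) := by
    ext x
    rw [Pi.mul_apply, gaussianPDF, gaussianPDF,
      ← ENNReal.ofReal_mul (gaussianPDFReal_nonneg _ _ _), gaussianPDFReal, gaussianPDFReal,
      mul_assoc _ (exp _), ← exp_add]
    congr 3
    field_simp
    ring
  rw [gaussianReal_of_var_ne_zero _ hv, gaussianReal_of_var_ne_zero _ hv, hpdf,
    withDensity_mul _ (measurable_gaussianPDF _ _) (by fun_prop)]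

lemma pi_update_withDensity {ι : Type*} [Fintype ι] [DecidableEq ι] {X : ι → Type*}
    [∀ i, MeasurableSpace (X i)] (κ : ∀ i, Measure (X i)) [∀ i, SigmaFinite (κ i)] (i : ι)
    {g : X i → ℝ≥0∞} (hg : Measurable g) [SigmaFinite ((κ i).withDensity g)] :
    Measure.pi (update κ i ((κ i).withDensity g)) =
      (Measure.pi κ).withDensity fun x ↦ g (x i) := by
  have : ∀ j, SigmaFinite (update κ i ((κ i).withDensity g) j) := fun j ↦ by
    obtain rfl | hj := eq_or_ne j i
    · rwa [update_self]
    · rw [update_of_ne hj]; infer_instance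
  refine Measure.pi_eq fun s hs ↦ ?_
  calc (Measure.pi κ).withDensity (fun x ↦ g (x i)) (Set.univ.pi s)
      = ∫⁻ x, g (x i) ∂Measure.pi fun j ↦ (κ j).restrict (s j) := by
        rw [withDensity_apply _ (.univ_pi hs), Measure.restrict_pi_pi]
    _ = ∫⁻ y, g y ∂(Measure.pi fun j ↦ (κ j).restrict (s j)).map (eval i) :=
        (lintegral_map hg (measurable_pi_apply i)).symm
    _ = (∏ j ∈ Finset.univ.erase i, κ j (s j)) * (κ i).withDensity g (s i) := by
        simp only [Measure.pi_map_eval, Measure.restrict_apply_univ, lintegral_smul_measure,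
          smul_eq_mul, withDensity_apply _ (hs i)]
    _ = (κ i).withDensity g (s i) * ∏ j ∈ Finset.univ.erase i, κ j (s j) := mul_comm _ _
    _ = ∏ j, update κ i ((κ i).withDensity g) j (s j) := by
        rw [← Finset.mul_prod_erase _ _ (Finset.mem_univ i), update_self]
        congr 1
        refine Finset.prod_congr rfl fun j hj ↦ ?_
        rw [update_of_ne (Finset.ne_of_mem_erase hj)]

variable {ι : Type*} [Fintype ι] [DecidableEq ι]

/-- The law of a Gaussian vector with independent coordinates of variance `v`, whose mean is `m`
in coordinate `i` and `0` elsewhere. With `m = L h` and `v = ε² h` it is the measure `P_i` of the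
white noise model. -/
noncomputable def spikedGaussian (m : ℝ) (v : NNReal) (i : ι) : Measure (ι → ℝ) :=
  Measure.pi fun j ↦ gaussianReal (if j = i then m else 0) v

instance (m : ℝ) (v : NNReal) (i : ι) : IsProbabilityMeasure (spikedGaussian m v i) := by
  unfold spikedGaussian; infer_instance

lemma spikedGaussian_eq_withDensity (m : ℝ) {v : NNReal} (hv : v ≠ 0) (i : ι) :
    spikedGaussian m v i = (Measure.pi fun _ ↦ gaussianReal 0 v).withDensity
      fun x ↦ ENNReal.ofReal (exp (m * (x i - m / 2) / v)) := by
  have hshift : gaussianReal m v = (gaussianReal 0 v).withDensity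
      fun x ↦ ENNReal.ofReal (exp (m * (x - m / 2) / v)) := by
    simpa using gaussianReal_eq_withDensity_gaussianReal 0 m hv
  have : SigmaFinite ((gaussianReal 0 v).withDensity
      fun x ↦ ENNReal.ofReal (exp (m * (x - m / 2) / v))) := by
    rw [← hshift]; infer_instance
  rw [← pi_update_withDensity (fun _ : ι ↦ gaussianReal 0 v) i
    (g := fun x ↦ ENNReal.ofReal (exp (m * (x - m / 2) / v))) (by fun_prop), ← hshift,
    spikedGaussian]
  congr 1
  ext1 j
  rw [update_apply, apply_ite (gaussianReal · v)]

-- The likelihood ratio is increasing in `x i` and equals the threshold at the mean `x i = m`.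
lemma spikedGaussian_real_likelihoodRatio_gt_le {m : ℝ} (hm : 0 < m) {v : NNReal} (hv : v ≠ 0)
    (i : ι) :
    (spikedGaussian m v i).real {x | exp (m ^ 2 / (2 * v)) < exp (m * (x i - m / 2) / v)} ≤
      1 / 2 := by
  have hv' : (0 : ℝ) < v := by positivity
  have hset : {x : ι → ℝ | exp (m ^ 2 / (2 * v)) < exp (m * (x i - m / 2) / v)} =
      eval i ⁻¹' Set.Ioi m := by
    ext x
    have hsplit : m ^ 2 / (2 * v) = m * (m - m / 2) / v := by field_simp; ring
    simp only [Set.mem_ofPred_eq, Set.mem_preimage, eval, Set.mem_Ioi, exp_lt_exp, hsplit,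
      div_lt_div_iff_of_pos_right hv', mul_lt_mul_iff_right₀ hm, sub_lt_sub_iff_right]
  have heval := measurePreserving_eval (fun j ↦ gaussianReal (if j = i then m else 0) v) i
  rw [if_pos rfl] at heval
  rw [hset, spikedGaussian, heval.measureReal_preimage measurableSet_Ioi.nullMeasurableSet]
  exact gaussianReal_real_Ioi_mean_le m v

theorem mul_le_iSup_integral_loss_spikedGaussian [Nonempty ι] [MeasurableSpace ι]
    [MeasurableSingletonClass ι] {m : ℝ} (hm : 0 < m) {v : NNReal} (hv : v ≠ 0)
    {f : (ι → ℝ) → ι} (hf : Measurable f) {D : ℝ} (hD : 0 ≤ D) {ℓ : ι → ι → ℝ}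
    (hℓ : ∀ i j, 0 ≤ ℓ i j) (hDℓ : ∀ i j, i ≠ j → D ≤ ℓ i j) :
    D * (1 / 2 - exp (m ^ 2 / (2 * v)) / Fintype.card ι) ≤
      ⨆ i, ∫ y, ℓ (f y) i ∂spikedGaussian m v i := by
  have h := mul_le_iSup_integral_loss (fun i ↦ by fun_prop) (spikedGaussian_eq_withDensity m hv)
    (exp_nonneg _) (spikedGaussian_real_likelihoodRatio_gt_le hm hv) hf hD hℓ hDℓ
  convert h using 3
  norm_num

end Gaussian

lemma eLpNorm_indicator_sub_indicator {X E : Type*} [MeasurableSpace X] {μ : Measure X}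
    [NormedAddCommGroup E] {s t : Set X} (hs : MeasurableSet s) (ht : MeasurableSet t)
    (hst : Disjoint s t) (hμs : μ s ≠ 0) {p : ℝ≥0∞} (hp : p ≠ 0) (c : E) :
    eLpNorm (s.indicator (fun _ ↦ c) - t.indicator fun _ ↦ c) p μ =
      ‖c‖ₑ * (μ s + μ t) ^ (1 / p.toReal) := by
  have hnorm : ∀ x, ‖(s.indicator (fun _ ↦ c) - t.indicator fun _ ↦ c) x‖ =
      ‖(s ∪ t).indicator (fun _ ↦ c) x‖ := fun x ↦ by
    by_cases hxs : x ∈ s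
    · simp [hxs, Set.disjoint_left.1 hst hxs]
    · by_cases hxt : x ∈ t <;> simp [hxs, hxt]
  have hμst : μ (s ∪ t) ≠ 0 := fun h ↦ hμs (measure_mono_null Set.subset_union_left h)
  rw [eLpNorm_congr_norm_ae (.of_forall hnorm), eLpNorm_indicator_const' (hs.union ht) hμst hp,
    measure_union hst ht]

lemma toReal_eLpNorm_indicator_sub_indicator {X : Type*} [MeasurableSpace X] {μ : Measure X}
    {s t : Set X} (hs : MeasurableSet s) (ht : MeasurableSet t) (hst : Disjoint s t) {h : ℝ}
    (hh : 0 < h) (hμs : μ s = ENNReal.ofReal h) (hμt : μ t = ENNReal.ofReal h) {p : ℝ≥0∞}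
    (hp : p ≠ 0) (L : ℝ) :
    (eLpNorm (s.indicator (fun _ ↦ L) - t.indicator fun _ ↦ L) p μ).toReal =
      |L| * (2 * h) ^ (1 / p).toReal := by
  rw [eLpNorm_indicator_sub_indicator hs ht hst (by simpa [hμs] using hh) hp, hμs, hμt,
    ← ENNReal.ofReal_add hh.le hh.le, ← two_mul, ENNReal.toReal_mul, ← ENNReal.toReal_rpow,
    ENNReal.toReal_ofReal (by positivity), toReal_enorm, norm_eq_abs, ENNReal.toReal_div,
    ENNReal.toReal_one]

section Calibration

lemma log_le_six_mul_five_sixths_log_sub_log_two {x : ℝ} (hx : 3 ≤ x) :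
    log x ≤ 6 * (5 / 6 * log x - log 2) := by
  have hlog_pow : log (2 ^ 3) ≤ log (3 ^ 2) := log_le_log (by norm_num) (by norm_num)
  have hlog : 3 * log 2 ≤ 2 * log 3 := by simpa [log_pow] using hlog_pow
  have hlog_x : log 3 ≤ log x := log_le_log (by norm_num) hx
  linarith

lemma exp_half_five_sixths_log_sub_log_two_le {x : ℝ} (hx : 1 ≤ x) :
    exp ((5 / 6 * log x - log 2) / 2) ≤ 5 / 12 * (x + 1) := by
  have hexp : exp (5 / 6 * log x - log 2) ≤ x / 2 := calc
    exp (5 / 6 * log x - log 2) ≤ exp (log x - log 2) := by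
      gcongr; linarith [log_nonneg hx]
    _ = x / 2 := by rw [exp_sub, exp_log (by linarith), exp_log two_pos]
  rw [exp_half]
  refine sqrt_le_iff.2 ⟨by positivity, hexp.trans ?_⟩
  nlinarith

lemma one_twelfth_le_half_sub_exp_div {L ε h n : ℝ} (hn : 2 ≤ n) (hL : L ≠ 0) (hε : ε ≠ 0)
    (hdef : h = ε ^ 2 / L ^ 2 * (5 / 6 * log (n - 1) - log 2)) :
    1 / 12 ≤ 1 / 2 - exp ((L * h) ^ 2 / (2 * (ε ^ 2 * h))) / n := by
  have hexponent : (L * h) ^ 2 / (2 * (ε ^ 2 * h)) = (5 / 6 * log (n - 1) - log 2) / 2 := calc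
    (L * h) ^ 2 / (2 * (ε ^ 2 * h)) = L ^ 2 / ε ^ 2 * h / 2 := by field_simp
    _ = (5 / 6 * log (n - 1) - log 2) / 2 := by rw [hdef]; field_simp
  have hexp : exp ((5 / 6 * log (n - 1) - log 2) / 2) ≤ 5 / 12 * n := by
    simpa using exp_half_five_sixths_log_sub_log_two_le (x := n - 1) (by linarith)
  have hdiv : exp ((5 / 6 * log (n - 1) - log 2) / 2) / n ≤ 5 / 12 :=
    (div_le_iff₀ (by linarith)).2 hexp
  rw [hexponent]
  linarith

lemma rpow_sub_half_mul_sqrt_le {L ε h l r : ℝ} (hL : 0 ≤ L) (hε : 0 ≤ ε) (hh : 0 < h)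
    (hl : 0 ≤ l) (hlh : ε ^ 2 * l ≤ 6 * L ^ 2 * h) :
    1 / (12 * √3) * (2 * h) ^ (r - 1 / 2) * ε * √l ≤ L * (2 * h) ^ r / 12 := by
  have hsqrt : ε * √l ≤ L * (√3 * √(2 * h)) := by
    refine (sq_le_sq₀ (by positivity) (by positivity)).1 ?_
    simp only [mul_pow, sq_sqrt hl, sq_sqrt (show (0 : ℝ) ≤ 3 by norm_num),
      sq_sqrt (show 0 ≤ 2 * h by positivity)]
    linarith
  calc 1 / (12 * √3) * (2 * h) ^ (r - 1 / 2) * ε * √l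
      = (2 * h) ^ r / (12 * (√3 * √(2 * h))) * (ε * √l) := by
        rw [rpow_sub (by positivity), ← sqrt_eq_rpow]; field_simp
    _ ≤ (2 * h) ^ r / (12 * (√3 * √(2 * h))) * (L * (√3 * √(2 * h))) := by gcongr
    _ = L * (2 * h) ^ r / 12 := by field_simp

end Calibration

theorem stmt_6_general {X ι : Type*} [MeasurableSpace X] {μ : Measure X} [Fintype ι]
    [DecidableEq ι] [MeasurableSpace ι] [MeasurableSingletonClass ι] (hι : 4 ≤ Fintype.card ι)
    {L ε h : ℝ} (hL : 0 < L) (hε : 0 < ε)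
    (hdef : h = ε ^ 2 / L ^ 2 * (5 / 6 * log ((Fintype.card ι : ℝ) - 1) - log 2))
    {p : ℝ≥0∞} (hp : p ≠ 0) {B : ι → Set X} (hB : ∀ i, MeasurableSet (B i))
    (hBdisj : Pairwise (Disjoint on B)) (hBμ : ∀ i, μ (B i) = ENNReal.ofReal h)
    {f : (ι → ℝ) → ι} (hf : Measurable f) :
    1 / (12 * √3) * (2 * h) ^ ((1 / p).toReal - 1 / 2) * ε *
        √(log ((Fintype.card ι : ℝ) - 1)) ≤
      ⨆ i, ∫ y, (eLpNorm ((B (f y)).indicator (fun _ ↦ L) - (B i).indicator fun _ ↦ L)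
        p μ).toReal ∂spikedGaussian (L * h) (ε ^ 2 * h).toNNReal i := by
  set n : ℝ := (Fintype.card ι : ℝ)
  have hn : 4 ≤ n := Nat.ofNat_le_cast.2 hι
  have : Nonempty ι := Fintype.card_pos_iff.1 (by lia)
  have hlog : 0 < log (n - 1) := log_pos (by linarith)
  have hlog_le := log_le_six_mul_five_sixths_log_sub_log_two (x := n - 1) (by linarith)
  have hh : 0 < h := hdef ▸ mul_pos (by positivity) (by linarith)
  have hlh : ε ^ 2 * log (n - 1) ≤ 6 * L ^ 2 * h := calc
    ε ^ 2 * log (n - 1) ≤ ε ^ 2 * (6 * (5 / 6 * log (n - 1) - log 2)) := by gcongr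
    _ = 6 * L ^ 2 * h := by rw [hdef]; field_simp
  have hloss : ∀ i j, i ≠ j → L * (2 * h) ^ (1 / p).toReal ≤
      (eLpNorm ((B i).indicator (fun _ ↦ L) - (B j).indicator fun _ ↦ L) p μ).toReal :=
    fun i j hij ↦ (abs_of_pos hL ▸ toReal_eLpNorm_indicator_sub_indicator (hB i) (hB j)
      (hBdisj hij) hh (hBμ i) (hBμ j) hp L).ge
  have herror : 1 / 12 ≤ 1 / 2 - exp ((L * h) ^ 2 / (2 * (ε ^ 2 * h).toNNReal)) / n := by
    rw [coe_toNNReal _ (by positivity)]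
    exact one_twelfth_le_half_sub_exp_div (by linarith) hL.ne' hε.ne' hdef
  calc _ ≤ L * (2 * h) ^ (1 / p).toReal / 12 :=
        rpow_sub_half_mul_sqrt_le hL.le hε.le hh hlog.le hlh
    _ = L * (2 * h) ^ (1 / p).toReal * (1 / 12) := by ring
    _ ≤ L * (2 * h) ^ (1 / p).toReal *
          (1 / 2 - exp ((L * h) ^ 2 / (2 * (ε ^ 2 * h).toNNReal)) / n) := by gcongr
    _ ≤ _ := mul_le_iSup_integral_loss_spikedGaussian (by positivity)
        (toNNReal_pos.2 (by positivity)).ne' hf (by positivity)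
        (fun _ _ ↦ ENNReal.toReal_nonneg) hloss

/-- Theorem 2 of the paper, lower bound: for the worst-case family
`f̄_i = L·1_{B_i}`, any selection rule `ĩ` incurs a risk of at least
`(1/(12√3))·K_p·ε·√(ln(N-1))` under one of the measures `P_i`, where
`K_p = (2h*)^{1/p - 1/2}`. -/
theorem stmt_6
    {d N : ℕ} (hd : 1 ≤ d) (hN : 4 ≤ N)
    (L ε : ℝ) (hL : 0 < L) (hε : 0 < ε)
    (hεL : ε ≤ L / Real.sqrt (N * Real.log N))
    (p : ℝ≥0∞) (hp : 2 < p)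
    (hstar : ℝ)
    (hstardef : hstar = ε ^ 2 / L ^ 2 * (5 / 6 * Real.log ((N : ℝ) - 1) - Real.log 2))
    (hstarpos : 0 < hstar) (hstarle : hstar ≤ 1 / N)
    -- the disjoint sets `B_i ⊆ [0,1]^d` of measure `h*`
    (B : Fin N → Set (Fin d → ℝ)) (hBmeas : ∀ i, MeasurableSet (B i))
    (hBsub : ∀ i, B i ⊆ Set.Icc 0 1)
    (hBdisj : Pairwise (Function.onFun Disjoint B))
    (hBvol : ∀ i, volume (B i) = ENNReal.ofReal hstar)
    -- the worst-case family `f̄_i = L·1_{B_i}`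
    (Fbar : Fin N → (Fin d → ℝ) → ℝ)
    (hFbar : ∀ i t, Fbar i t = (B i).indicator (fun _ => L) t)
    -- `P_i`: the law of the sufficient statistic under `f = f̄_i`
    (P : Fin N → Measure (Fin N → ℝ))
    (hP : ∀ i, P i = Measure.pi fun j => ProbabilityTheory.gaussianReal
      (if j = i then L * hstar else 0) (Real.toNNReal (ε ^ 2 * hstar)))
    -- an arbitrary measurable selection rule
    (itil : (Fin N → ℝ) → Fin N) (hitil : Measurable itil) :
    1 / (12 * Real.sqrt 3) * (2 * hstar) ^ ((1 / p).toReal - 1 / 2) * ε *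
        Real.sqrt (Real.log ((N : ℝ) - 1)) ≤
      ⨆ i, ∫ y, Lnorm p (fun t => Fbar (itil y) t - Fbar i t) ∂(P i) := by
  obtain rfl : Fbar = fun i ↦ (B i).indicator fun _ ↦ L := funext₂ hFbar
  obtain rfl : P = spikedGaussian (L * hstar) (ε ^ 2 * hstar).toNNReal := funext hP
  have hBcube (i : Fin N) : cubeMeasure d (B i) = ENNReal.ofReal hstar :=
    (Measure.restrict_eq_self _ (hBsub i)).trans (hBvol i)
  simpa only [Fintype.card_fin, Lnorm, Pi.sub_def] using stmt_6_general (by simpa) hL hε (by simpa)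
    (zero_lt_two.trans hp).ne' hBmeas hBdisj hBcube hitil
end

section
/- In the worst-case family setting described in the context, for every measurable selection rule ĩ : ℝ^N → I_N one has max_{i∈I_N} P_i({y : ĩ(y) ≠ i}) ≥ 1/6. -/
open MeasureTheory
open scoped ENNReal

/-! Compare every `P i` with the centred product measure `Q`. The Donsker–Varadhan inequality for
`t` times the indicator of `A`, where `A` is the event that the rule selects `i` and
`t = log (N - 1)`, bounds `t * P i A` by `KL (P i, Q) + log (1 + (N - 2) * Q A)`. These events
partition the sample space, so their `Q`-probabilities sum to `1` and, by concavity, the logarithms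
average to at most `log 2`. This is Fano's inequality with a reference measure. Here `P i` and `Q`
differ only in coordinate `i`, where they are Gaussian with the same variance, so `KL (P i, Q)` is
half the pairwise divergence between the `P i`. -/

open InformationTheory ProbabilityTheory
open Real (exp log)
open scoped NNReal

section DonskerVaradhan

variable {𝓨 : Type*} [MeasurableSpace 𝓨] {μ ν : Measure 𝓨}
  [IsProbabilityMeasure μ] [IsProbabilityMeasure ν]

lemma integral_le_toReal_klDiv_add_log_integral_exp (h : klDiv μ ν ≠ ∞) {f : 𝓨 → ℝ}
    (hfμ : Integrable f μ) (hfν : Integrable (fun y ↦ exp (f y)) ν) :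
    ∫ y, f y ∂μ ≤ (klDiv μ ν).toReal + log (∫ y, exp (f y) ∂ν) := by
  obtain ⟨hμν, hllr⟩ := klDiv_ne_top_iff.mp h
  have := isProbabilityMeasure_tilted hfν
  have gibbs : 0 ≤ ∫ y, llr μ (ν.tilted f) y ∂μ := by
    rw [← toReal_klDiv_of_measure_eq (hμν.trans (absolutelyContinuous_tilted hfν)) (by simp)]
    exact ENNReal.toReal_nonneg
  rw [integral_llr_tilted_right hμν hfμ hfν hllr,
    ← toReal_klDiv_of_measure_eq hμν (by simp)] at gibbs
  linarith

lemma mul_measureReal_le_toReal_klDiv_add_log (h : klDiv μ ν ≠ ∞) {s : Set 𝓨}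
    (hs : MeasurableSet s) (t : ℝ) :
    t * μ.real s ≤ (klDiv μ ν).toReal + log (1 + (exp t - 1) * ν.real s) := by
  have exp_indicator : (fun y ↦ exp (s.indicator (fun _ ↦ t) y)) =
      fun y ↦ 1 + s.indicator (fun _ ↦ exp t - 1) y := by
    ext y
    by_cases hy : y ∈ s <;> simp [hy]
  have hint (ρ : Measure 𝓨) [IsProbabilityMeasure ρ] (c : ℝ) :
      Integrable (s.indicator fun _ ↦ c) ρ := (integrable_const c).indicator hs
  have hexp : Integrable (fun y ↦ exp (s.indicator (fun _ ↦ t) y)) ν := by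
    rw [exp_indicator]
    exact (integrable_const 1).add (hint ν _)
  have hDV := integral_le_toReal_klDiv_add_log_integral_exp h (hint μ t) hexp
  rw [exp_indicator, integral_add (integrable_const 1) (hint ν _), integral_indicator_const _ hs,
    integral_indicator_const _ hs] at hDV
  simpa [mul_comm] using hDV

end DonskerVaradhan

section Fano

lemma log_le_half_sub_one_add_log_two {x : ℝ} (hx : 0 < x) : log x ≤ x / 2 - 1 + log 2 := by
  have := Real.log_le_sub_one_of_pos (half_pos hx)
  rw [Real.log_div hx.ne' two_ne_zero] at this
  linarith

variable {𝓨 ι : Type*} [MeasurableSpace 𝓨] [Fintype ι] [MeasurableSpace ι]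
  [MeasurableSingletonClass ι] {P : ι → Measure 𝓨} [∀ i, IsProbabilityMeasure (P i)]
  {Q : Measure 𝓨} [IsProbabilityMeasure Q] {rule : 𝓨 → ι}

lemma log_card_sub_one_mul_sum_measureReal_le [Nontrivial ι] (hP : ∀ i, klDiv (P i) Q ≠ ∞)
    (hrule : Measurable rule) :
    log (Fintype.card ι - 1) * ∑ i, (P i).real (rule ⁻¹' {i}) ≤
      ∑ i, (klDiv (P i) Q).toReal + Fintype.card ι * log 2 := by
  have hM : (2 : ℝ) ≤ Fintype.card ι := by exact_mod_cast Fintype.one_lt_card (α := ι)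
  set M : ℝ := (Fintype.card ι : ℝ)
  have hpre (i : ι) : MeasurableSet (rule ⁻¹' {i}) := hrule (measurableSet_singleton i)
  have sum_Q : ∑ i, Q.real (rule ⁻¹' {i}) = 1 := by
    rw [sum_measureReal_preimage_singleton (μ := Q) Finset.univ fun i _ ↦ hpre i]
    simp
  have bound (i : ι) : log (M - 1) * (P i).real (rule ⁻¹' {i}) ≤ (klDiv (P i) Q).toReal +
      ((1 + (M - 2) * Q.real (rule ⁻¹' {i})) / 2 - 1 + log 2) := by
    have hDV := mul_measureReal_le_toReal_klDiv_add_log (hP i) (hpre i) (log (M - 1))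
    rw [Real.exp_log (by linarith), show M - 1 - 1 = M - 2 by ring] at hDV
    have hpos : 0 < 1 + (M - 2) * Q.real (rule ⁻¹' {i}) :=
      add_pos_of_pos_of_nonneg one_pos (mul_nonneg (by linarith) measureReal_nonneg)
    -- The tangent of `log` at `2` makes the bound affine in the `Q`-probability, so that it sums.
    exact hDV.trans (by gcongr; exact log_le_half_sub_one_add_log_two hpos)
  calc log (M - 1) * ∑ i, (P i).real (rule ⁻¹' {i})
    _ ≤ ∑ i, ((klDiv (P i) Q).toReal +
        ((1 + (M - 2) * Q.real (rule ⁻¹' {i})) / 2 - 1 + log 2)) := by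
      rw [Finset.mul_sum]
      exact Finset.sum_le_sum fun i _ ↦ bound i
    _ = ∑ i, (klDiv (P i) Q).toReal + (M * log 2 - 1) := by
      simp only [Finset.sum_add_distrib, Finset.sum_sub_distrib, ← Finset.sum_div,
        ← Finset.mul_sum, sum_Q, Finset.sum_const, Finset.card_univ, nsmul_eq_mul]
      ring
    _ ≤ ∑ i, (klDiv (P i) Q).toReal + M * log 2 := by linarith

lemma le_iSup_measureReal_ne_of_klDiv_le (hι : 2 < Fintype.card ι) {K : ℝ≥0}
    (hK : ∀ i, klDiv (P i) Q ≤ K) {δ : ℝ}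
    (hδ : K + log 2 ≤ (1 - δ) * log (Fintype.card ι - 1)) (hrule : Measurable rule) :
    δ ≤ ⨆ i, (P i).real {y | rule y ≠ i} := by
  have : Nontrivial ι := Fintype.one_lt_card_iff_nontrivial.mp (by lia)
  set S := ⨆ i, (P i).real {y | rule y ≠ i}
  have hM : (2 : ℝ) < Fintype.card ι := by exact_mod_cast hι
  set M : ℝ := (Fintype.card ι : ℝ)
  have hlog : 0 < log (M - 1) := Real.log_pos (by linarith)
  have success_ge (i : ι) : 1 - S ≤ (P i).real (rule ⁻¹' {i}) := by
    have hsup : (P i).real {y | rule y ≠ i} ≤ S :=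
      le_ciSup (f := fun i ↦ (P i).real {y | rule y ≠ i}) (Set.finite_range _).bddAbove i
    have hcompl : (P i).real {y | rule y ≠ i} = 1 - (P i).real (rule ⁻¹' {i}) :=
      probReal_compl_eq_one_sub (hrule (measurableSet_singleton i))
    linarith
  have fano : log (M - 1) * (M * (1 - S)) ≤ M * K + M * log 2 :=
    calc log (M - 1) * (M * (1 - S))
      _ = log (M - 1) * ∑ _i : ι, (1 - S) := by
        rw [Finset.sum_const, Finset.card_univ, nsmul_eq_mul]
      _ ≤ log (M - 1) * ∑ i, (P i).real (rule ⁻¹' {i}) := by gcongr; exact success_ge _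
      _ ≤ ∑ i, (klDiv (P i) Q).toReal + M * log 2 :=
        log_card_sub_one_mul_sum_measureReal_le (fun i ↦ ne_top_of_le_ne_top (by simp) (hK i)) hrule
      _ ≤ ∑ _i : ι, (K : ℝ) + M * log 2 := by
        gcongr with i
        exact ENNReal.toReal_mono ENNReal.coe_ne_top (hK i)
      _ = M * K + M * log 2 := by simp [M]
  have : M * ((1 - S) * log (M - 1)) ≤ M * ((1 - δ) * log (M - 1)) :=
    calc M * ((1 - S) * log (M - 1))
      _ ≤ M * (K + log 2) := by linarith
      _ ≤ M * ((1 - δ) * log (M - 1)) := by gcongr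
  have := le_of_mul_le_mul_right (le_of_mul_le_mul_left this (by linarith)) hlog
  linarith

end Fano

section Product

variable {ι : Type*} [Fintype ι] [DecidableEq ι] {X : ι → Type*} [∀ i, MeasurableSpace (X i)]
  (μ : ∀ i, Measure (X i)) [∀ i, IsProbabilityMeasure (μ i)]

lemma map_update_prod_pi (i : ι) (ν : Measure (X i)) [IsProbabilityMeasure ν] :
    (ν.prod (Measure.pi μ)).map (fun p ↦ Function.update p.2 i p.1) =
      Measure.pi (Function.update μ i ν) := by
  have (j : ι) : IsProbabilityMeasure (Function.update μ i ν j) := by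
    rcases eq_or_ne j i with rfl | hj
    · simpa
    · simpa [hj] using inferInstanceAs (IsProbabilityMeasure (μ j))
  refine (Measure.pi_eq fun s hs ↦ ?_).symm
  have preimage_box : (fun p : X i × (∀ j, X j) ↦ Function.update p.2 i p.1) ⁻¹' Set.univ.pi s =
      s i ×ˢ Set.univ.pi (Function.update s i Set.univ) := by
    ext p
    simp only [Set.mem_preimage, Set.mem_prod, Set.mem_univ_pi]
    grind [Function.update]
  rw [Measure.map_apply (by fun_prop) (.univ_pi hs), preimage_box, Measure.prod_prod,
    Measure.pi_pi, ← Finset.mul_prod_erase _ _ (Finset.mem_univ i),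
    ← Finset.mul_prod_erase _ _ (Finset.mem_univ i)]
  simp only [Function.update_self, measure_univ, one_mul]
  congr 1
  exact Finset.prod_congr rfl fun j hj ↦ by simp [Finset.ne_of_mem_erase hj]

-- Both product measures are images under the map that overwrites coordinate `i`, applied to
-- product measures with the same second factor, so the data processing inequality applies.
lemma klDiv_pi_update_le (i : ι) (ν : Measure (X i)) [IsProbabilityMeasure ν] :
    klDiv (Measure.pi (Function.update μ i ν)) (Measure.pi μ) ≤ klDiv ν (μ i) := by
  have pi_eq_map := map_update_prod_pi μ i (μ i)
  rw [Function.update_eq_self] at pi_eq_map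
  calc klDiv (Measure.pi (Function.update μ i ν)) (Measure.pi μ)
    _ ≤ klDiv (ν.prod (Measure.pi μ)) ((μ i).prod (Measure.pi μ)) := by
      rw [← map_update_prod_pi μ i ν]
      nth_rw 2 [← pi_eq_map]
      exact klDiv_map_le _ _ (by fun_prop)
    _ = klDiv ν (μ i) := by
      rw [← Measure.compProd_const, ← Measure.compProd_const, klDiv_compProd_left]

end Product

section Gaussian

lemma klDiv_tilted_self {𝓨 : Type*} [MeasurableSpace 𝓨] {μ : Measure 𝓨} [IsProbabilityMeasure μ]
    {f : 𝓨 → ℝ} (hexp : Integrable (fun y ↦ exp (f y)) μ) (hf : Integrable f (μ.tilted f)) :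
    klDiv (μ.tilted f) μ =
      ENNReal.ofReal (∫ y, f y ∂(μ.tilted f) - log (∫ y, exp (f y) ∂μ)) := by
  have := isProbabilityMeasure_tilted hexp
  have hac := tilted_absolutelyContinuous μ f
  have hllr : llr (μ.tilted f) μ =ᵐ[μ.tilted f] fun y ↦ f y - log (∫ z, exp (f z) ∂μ) :=
    hac.ae_le (log_rnDeriv_tilted_left_self hexp)
  rw [klDiv_of_ac_of_integrable hac ((hf.sub (integrable_const _)).congr hllr.symm),
    integral_congr_ae hllr, integral_sub hf (integrable_const _)]
  simp

lemma gaussianReal_tilted_mul (m t : ℝ) {v : ℝ≥0} (hv : v ≠ 0) :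
    (gaussianReal m v).tilted (fun x ↦ t * x) = gaussianReal (m + v * t) v := by
  have hmgf : ∫ x, exp (t * x) ∂(gaussianReal m v) = exp (m * t + v * t ^ 2 / 2) :=
    congrFun mgf_fun_id_gaussianReal t
  have hv' : (v : ℝ) ≠ 0 := by exact_mod_cast hv
  rw [Measure.tilted, hmgf, gaussianReal_of_var_ne_zero _ hv, gaussianReal_of_var_ne_zero _ hv,
    ← withDensity_mul _ (measurable_gaussianPDF _ _) (by fun_prop)]
  congr 1
  ext x
  simp only [Pi.mul_apply, gaussianPDF, gaussianPDFReal]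
  rw [← ENNReal.ofReal_mul (by positivity), mul_assoc, ← Real.exp_sub, ← Real.exp_add]
  congr 3
  field

lemma klDiv_gaussianReal_gaussianReal (m₁ m₂ : ℝ) {v : ℝ≥0} (hv : v ≠ 0) :
    klDiv (gaussianReal m₁ v) (gaussianReal m₂ v) =
      ENNReal.ofReal ((m₁ - m₂) ^ 2 / (2 * v)) := by
  have hv' : (v : ℝ) ≠ 0 := by exact_mod_cast hv
  set t : ℝ := (m₁ - m₂) / v with ht
  have htilt : (gaussianReal m₂ v).tilted (fun x ↦ t * x) = gaussianReal m₁ v := by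
    rw [gaussianReal_tilted_mul m₂ t hv, mul_div_cancel₀ _ hv', add_sub_cancel]
  have hmgf : ∫ x, exp (t * x) ∂(gaussianReal m₂ v) = exp (m₂ * t + v * t ^ 2 / 2) :=
    congrFun mgf_fun_id_gaussianReal t
  have hint : Integrable (fun x ↦ t * x) (gaussianReal m₁ v) :=
    ((memLp_id_gaussianReal 1).integrable (by simp)).const_mul t
  rw [← htilt, klDiv_tilted_self (integrable_exp_mul_gaussianReal t) (htilt ▸ hint), htilt,
    integral_const_mul, integral_id_gaussianReal, hmgf, Real.log_exp, ht]
  congr 1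
  field

end Gaussian

section GaussianSelection

variable {ι : Type*} [Fintype ι] [DecidableEq ι]

lemma klDiv_pi_gaussianReal_single_le (i : ι) (m : ℝ) {v : ℝ≥0} (hv : v ≠ 0) :
    klDiv (Measure.pi fun j ↦ gaussianReal (if j = i then m else 0) v)
      (Measure.pi fun _ ↦ gaussianReal 0 v) ≤ ENNReal.ofReal (m ^ 2 / (2 * v)) := by
  have heq : (fun j ↦ gaussianReal (if j = i then m else 0) v) =
      Function.update (fun _ ↦ gaussianReal 0 v) i (gaussianReal m v) := by
    ext1 j
    rcases eq_or_ne j i with rfl | hj <;> simp [*]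
  rw [heq, ← sub_zero m, ← klDiv_gaussianReal_gaussianReal m 0 hv, sub_zero]
  exact klDiv_pi_update_le (fun _ : ι ↦ gaussianReal 0 v) i _

theorem stmt_7_general [MeasurableSpace ι] [MeasurableSingletonClass ι]
    (hι : 2 < Fintype.card ι) {L ε h δ : ℝ} (hL : L ≠ 0) (hε : ε ≠ 0) (hpos : 0 < h)
    (hle : h ≤ 2 * (ε ^ 2 / L ^ 2 * ((1 - δ) * log (Fintype.card ι - 1) - log 2)))
    {rule : (ι → ℝ) → ι} (hrule : Measurable rule) :
    δ ≤ ⨆ i, (Measure.pi fun j ↦ gaussianReal (if j = i then L * h else 0)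
      (Real.toNNReal (ε ^ 2 * h))).real {y | rule y ≠ i} := by
  have hvar : 0 < ε ^ 2 * h := by positivity
  refine le_iSup_measureReal_ne_of_klDiv_le hι
    (fun i ↦ klDiv_pi_gaussianReal_single_le i _ (Real.toNNReal_pos.mpr hvar).ne') ?_ hrule
  rw [Real.coe_toNNReal _ (by positivity), Real.coe_toNNReal _ hvar.le]
  have hdiv : (L * h) ^ 2 / (2 * (ε ^ 2 * h)) = L ^ 2 / (2 * ε ^ 2) * h := by field
  have hbound := mul_le_mul_of_nonneg_left hle (show 0 ≤ L ^ 2 / (2 * ε ^ 2) by positivity)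
  have hcancel (x : ℝ) : L ^ 2 / (2 * ε ^ 2) * (2 * (ε ^ 2 / L ^ 2 * x)) = x := by field
  rw [hcancel] at hbound
  linarith

end GaussianSelection

/-- Fano step in the proof of Theorem 2: for the product Gaussian
measures `P_i` of the worst-case family, any measurable selection rule errs with
probability at least `1/6` under one of the `P_i`. -/
theorem stmt_7
    {N : ℕ} (hN : 4 ≤ N)
    (L ε : ℝ) (hL : 0 < L) (hε : 0 < ε)
    (hεL : ε ≤ L / Real.sqrt (N * Real.log N))
    (hstar : ℝ)
    (hstardef : hstar = ε ^ 2 / L ^ 2 * (5 / 6 * Real.log ((N : ℝ) - 1) - Real.log 2))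
    (hstarpos : 0 < hstar) (hstarle : hstar ≤ 1 / N)
    (P : Fin N → Measure (Fin N → ℝ))
    (hP : ∀ i, P i = Measure.pi fun j => ProbabilityTheory.gaussianReal
      (if j = i then L * hstar else 0) (Real.toNNReal (ε ^ 2 * hstar)))
    (itil : (Fin N → ℝ) → Fin N) (hitil : Measurable itil) :
    1 / 6 ≤ ⨆ i, (P i {y | itil y ≠ i}).toReal := by
  obtain rfl := funext hP
  refine stmt_7_general (by simpa using by lia) hL.ne' hε.ne' hstarpos ?_ hitil
  rw [Fintype.card_fin]
  linarith
end
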